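/- arXiv:2509.17705 — 8 statements merged into one kernel-verified Lean document; each statement's English description precedes it below -/
import Mathlib

section
/- For all nonnegative integers t and all n ≥ 0, the number of overpartition t-tuples satisfies p̄_t(8n+5) ≡ 0 (mod 8). -/
/-- The number of overpartitions of `n`: a partition of `n` together with a
choice of which distinct part values are overlined (the first occurrence of a
part value may be overlined), so that the count is `∑_{λ ⊢ n} 2^{#distinct parts of λ}`. -/
def overpartitionCount (n : ℕ) : ℕ :=
  ∑ p : n.Partition, 2 ^ p.parts.toFinset.card

/-- The number of overpartition `t`-tuples of `n`: `t`-tuples of overpartitions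
whose sizes sum to `n`. -/
def overpartitionTuples (t n : ℕ) : ℕ :=
  ∑ c ∈ Finset.Nat.antidiagonalTuple t n, ∏ i, overpartitionCount (c i)

/-- The series `S` with `P = 1 + 2 S`. -/
noncomputable def opS : PowerSeries ℕ :=
  PowerSeries.mk fun n => if n = 0 then 0 else overpartitionCount n / 2

theorem op_zero : overpartitionCount 0 = 1 := by
  simp [overpartitionCount]

theorem op_two_dvd (n : ℕ) (hn : n ≠ 0) : 2 ∣ overpartitionCount n := by
  unfold overpartitionCount
  refine Finset.dvd_sum fun p _ => ?_
  refine dvd_pow_self 2 ?_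
  rw [Ne, Finset.card_eq_zero, Multiset.toFinset_eq_empty]
  intro h
  have := p.parts_sum
  rw [h] at this
  simp at this
  omega

theorem op_series : PowerSeries.mk overpartitionCount = 1 + 2 * opS := by
  ext n
  have h2 : (2 : PowerSeries ℕ) = PowerSeries.C 2 := by simp
  rw [h2, map_add, PowerSeries.coeff_C_mul, opS, PowerSeries.coeff_mk, PowerSeries.coeff_mk,
    PowerSeries.coeff_one]
  by_cases hn : n = 0
  · simp [hn, op_zero]
  · have := op_two_dvd n hn
    simp [hn]
    omega

theorem tuples_series (t : ℕ) :
    PowerSeries.mk (overpartitionTuples t) = (PowerSeries.mk overpartitionCount) ^ t := by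
  induction t with
  | zero =>
    ext n
    cases n <;> simp [overpartitionTuples, PowerSeries.coeff_one]
  | succ t ih =>
    rw [pow_succ', ← ih]
    ext n
    rw [PowerSeries.coeff_mul]
    simp only [PowerSeries.coeff_mk]
    unfold overpartitionTuples
    simp only [Finset.mul_sum]
    rw [Finset.sum_sigma']
    refine Finset.sum_bij' (fun c _ => ⟨(c 0, ∑ i : Fin t, c i.succ), Fin.tail c⟩)
      (fun x _ => Fin.cons x.1.1 x.2) ?_ ?_ ?_ ?_ ?_
    · intro c hc
      simp only [Finset.mem_sigma, Finset.Nat.mem_antidiagonalTuple]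
        at hc ⊢
      rw [Fin.sum_univ_succ] at hc
      exact ⟨Finset.HasAntidiagonal.mem_antidiagonal.2 hc, rfl⟩
    · rintro ⟨⟨a, b⟩, c⟩ hc
      simp only [Finset.mem_sigma, Finset.Nat.mem_antidiagonalTuple]
        at hc ⊢
      rw [Fin.sum_univ_succ]
      simp only [Fin.cons_zero, Fin.cons_succ]
      rw [hc.2]
      exact Finset.HasAntidiagonal.mem_antidiagonal.1 hc.1
    · intro c hc
      exact Fin.cons_self_tail c
    · rintro ⟨⟨a, b⟩, c⟩ hc
      simp only [Finset.mem_sigma, Finset.Nat.mem_antidiagonalTuple]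
        at hc
      obtain ⟨_, rfl⟩ := hc
      simp
    · intro c hc
      rw [Fin.prod_univ_succ]
      rfl

theorem pow_expand (S : PowerSeries ℕ) (t : ℕ) : ∃ (c : ℕ) (Q : PowerSeries ℕ),
    (1 + 2 * S) ^ t = 1 + 2 * (t : PowerSeries ℕ) * S + 4 * (c : PowerSeries ℕ) * (S * S)
      + 8 * Q := by
  induction t with
  | zero => exact ⟨0, 0, by simp⟩
  | succ t ih =>
    obtain ⟨c, Q, h⟩ := ih
    refine ⟨c + t, Q + c * S * S * S + 2 * Q * S, ?_⟩
    rw [pow_succ, h]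
    push_cast
    ring

theorem coeff_sq_even (S : PowerSeries ℕ) (N : ℕ) (hN : Odd N) :
    2 ∣ PowerSeries.coeff N (S * S) := by
  rw [PowerSeries.coeff_mul, ← CharP.cast_eq_zero_iff (ZMod 2), Nat.cast_sum]
  refine Finset.sum_involution (fun x _ => (x.2, x.1)) ?_ ?_ ?_ ?_
  · intro x _
    rw [mul_comm (PowerSeries.coeff x.2 S)]
    exact CharTwo.add_self_eq_zero _
  · rintro ⟨a, b⟩ h _ h2
    simp at h h2
    rw [← h, h2.1] at hN
    exact (Nat.not_even_iff_odd.2 hN) ⟨a, by omega⟩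
  · rintro ⟨a, b⟩ h
    simp at h ⊢
    omega
  · intros; rfl

/-- quadruples `(a, c, m, k)` coding partitions with parts `a` (m times), `a + c` (k times). -/
def quads (N : ℕ) : Finset (ℕ × ℕ × ℕ × ℕ) :=
  (Finset.Icc 1 N ×ˢ Finset.Icc 1 N ×ˢ Finset.Icc 1 N ×ˢ Finset.Icc 1 N).filter
    fun x => x.2.2.1 * x.1 + x.2.2.2 * (x.1 + x.2.1) = N

theorem mem_quads (N a c m k : ℕ) : (a, c, m, k) ∈ quads N ↔
    0 < a ∧ 0 < c ∧ 0 < m ∧ 0 < k ∧ m * a + k * (a + c) = N := by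
  simp only [quads, Finset.mem_filter, Finset.mem_product, Finset.mem_Icc]
  constructor
  · rintro ⟨⟨h1, h2, h3, h4⟩, h⟩
    exact ⟨h1.1, h2.1, h3.1, h4.1, h⟩
  · rintro ⟨ha, hc, hm, hk, h⟩
    have h1 : a ≤ m * a := Nat.le_mul_of_pos_left _ hm
    have h2 : m ≤ m * a := Nat.le_mul_of_pos_right _ ha
    have h3 : a + c ≤ k * (a + c) := Nat.le_mul_of_pos_left _ hk
    have h4 : k ≤ k * (a + c) := Nat.le_mul_of_pos_right _ (by omega)
    refine ⟨⟨⟨ha, ?_⟩, ⟨hc, ?_⟩, ⟨hm, ?_⟩, ⟨hk, ?_⟩⟩, h⟩ <;> omega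

/-- self-conjugate quadruples -/
def fixedQuads (N : ℕ) : Finset (ℕ × ℕ × ℕ × ℕ) :=
  (quads N).filter fun x => x.1 = x.2.2.2 ∧ x.2.1 = x.2.2.1

theorem quads_parity (N : ℕ) : 2 ∣ (quads N).card + (fixedQuads N).card := by
  have h1 := Finset.card_filter_add_card_filter_not (s := quads N)
    (fun x : ℕ × ℕ × ℕ × ℕ => x.1 = x.2.2.2 ∧ x.2.1 = x.2.2.1)
  have h2 : 2 ∣ ((quads N).filter
      (fun x : ℕ × ℕ × ℕ × ℕ => ¬ (x.1 = x.2.2.2 ∧ x.2.1 = x.2.2.1))).card := by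
    rw [← CharP.cast_eq_zero_iff (ZMod 2), Finset.card_eq_sum_ones, Nat.cast_sum]
    refine Finset.sum_involution (fun x _ => (x.2.2.2, x.2.2.1, x.2.1, x.1)) ?_ ?_ ?_ ?_
    · intros; decide
    · rintro ⟨a, c, m, k⟩ h _ h2
      simp at h h2
      omega
    · rintro ⟨a, c, m, k⟩ h
      simp only [Finset.mem_filter, mem_quads] at h ⊢
      obtain ⟨⟨h1, h2, h3, h4, h5⟩, h6⟩ := h
      refine ⟨⟨h4, h3, h2, h1, ?_⟩, by omega⟩
      rw [← h5]; ring
    · intros; rfl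
  unfold fixedQuads
  omega

theorem divisors_card (N : ℕ) (hN : Odd N) (hsq : ∀ x, x * x ≠ N) :
    N.divisors.card = 2 * (fixedQuads N).card := by
  have hN0 : N ≠ 0 := by rintro rfl; simp at hN
  have h1 := Finset.card_filter_add_card_filter_not (s := N.divisors) (fun x => x * x < N)
  have h2 : (N.divisors.filter fun x => ¬ x * x < N).card
      = (N.divisors.filter fun x => x * x < N).card := by
    refine Finset.card_nbij' (fun x => N / x) (fun x => N / x) ?_ ?_ ?_ ?_
    · intro x hx
      simp only [Finset.coe_filter, Set.mem_ofPred_eq, Nat.mem_divisors] at hx ⊢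
      obtain ⟨⟨⟨y, rfl⟩, _⟩, h⟩ := hx
      have hx0 : 0 < x := by rcases Nat.eq_zero_or_pos x with h | h; simp [h] at hN0; exact h
      rw [Nat.mul_div_cancel_left _ hx0]
      refine ⟨⟨Dvd.intro_left _ rfl, hN0⟩, ?_⟩
      have := hsq x
      have hyx : y < x := by
        by_contra hc
        have : x * x ≤ x * y := Nat.mul_le_mul_left _ (by omega)
        omega
      have hy0 : 0 < y := by rcases Nat.eq_zero_or_pos y with h | h; simp [h] at hN0; exact h
      exact Nat.mul_lt_mul_of_pos_right hyx hy0
    · intro x hx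
      simp only [Finset.coe_filter, Set.mem_ofPred_eq, Nat.mem_divisors] at hx ⊢
      obtain ⟨⟨⟨y, rfl⟩, _⟩, h⟩ := hx
      have hx0 : 0 < x := by rcases Nat.eq_zero_or_pos x with h | h; simp [h] at hN0; exact h
      rw [Nat.mul_div_cancel_left _ hx0]
      refine ⟨⟨Dvd.intro_left _ rfl, hN0⟩, ?_⟩
      have := Nat.lt_of_mul_lt_mul_left h
      have : x * y ≤ y * y := Nat.mul_le_mul_right _ (by omega)
      omega
    · intro x hx
      simp only [Finset.coe_filter, Set.mem_ofPred_eq, Nat.mem_divisors] at hx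
      exact Nat.div_div_self hx.1.1 hN0
    · intro x hx
      simp only [Finset.coe_filter, Set.mem_ofPred_eq, Nat.mem_divisors] at hx
      exact Nat.div_div_self hx.1.1 hN0
  have h3 : (fixedQuads N).card = (N.divisors.filter fun x => x * x < N).card := by
    refine Finset.card_nbij (fun x => x.1) ?_ ?_ ?_
    · rintro ⟨a, c, m, k⟩ h
      simp only [fixedQuads, Finset.mem_filter, mem_quads, Nat.mem_divisors,
        Finset.coe_filter, Set.mem_ofPred_eq] at h ⊢
      obtain ⟨⟨ha, hc, hm, hk, h⟩, rfl, rfl⟩ := h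
      refine ⟨⟨⟨c + (a + c), by rw [← h]; ring⟩, hN0⟩, ?_⟩
      rw [← h]
      nlinarith
    · rintro ⟨a, c, m, k⟩ h ⟨a', c', m', k'⟩ h' haa
      simp only [fixedQuads, Finset.mem_filter, mem_quads,
        Finset.coe_filter, Set.mem_ofPred_eq] at h h' haa
      obtain ⟨⟨ha, hc, hm, hk, h⟩, rfl, rfl⟩ := h
      obtain ⟨⟨ha', hc', hm', hk', h'⟩, rfl, rfl⟩ := h'
      subst haa
      have : a * c = a * c' := by nlinarith
      have := Nat.eq_of_mul_eq_mul_left ha this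
      subst this
      rfl
    · intro x hx
      simp only [Finset.coe_filter, Set.mem_ofPred_eq, Nat.mem_divisors] at hx
      obtain ⟨⟨⟨y, rfl⟩, _⟩, h⟩ := hx
      have hlt := Nat.lt_of_mul_lt_mul_left h
      obtain ⟨hox, hoy⟩ := Nat.odd_mul.1 hN
      obtain ⟨u, rfl⟩ := hox
      obtain ⟨v, rfl⟩ := hoy
      obtain ⟨w, rfl⟩ : ∃ w, v = u + w := ⟨v - u, by omega⟩
      refine ⟨(2 * u + 1, w, w, 2 * u + 1), ?_, rfl⟩
      simp only [fixedQuads, Finset.mem_filter, mem_quads,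
        Finset.coe_filter, Set.mem_ofPred_eq]
      refine ⟨⟨by omega, by omega, by omega, by omega, by ring⟩, by simp⟩
  omega

theorem card_one (N : ℕ) (hN : N ≠ 0) :
    ((Finset.univ : Finset N.Partition).filter fun p => p.parts.toFinset.card = 1).card
      = N.divisors.card := by
  symm
  refine Finset.card_bij (fun x hx => ⟨Multiset.replicate (N / x) x, ?_, ?_⟩) ?_ ?_ ?_
  · intro i hi
    rw [Multiset.eq_of_mem_replicate hi]
    exact Nat.pos_of_mem_divisors hx
  · rw [Multiset.sum_replicate, smul_eq_mul, Nat.div_mul_cancel (Nat.dvd_of_mem_divisors hx)]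
  · intro x hx
    have : N / x ≠ 0 := (Nat.div_pos (Nat.divisor_le hx) (Nat.pos_of_mem_divisors hx)).ne'
    simp [Multiset.toFinset_replicate, this]
  · intro x hx y hy h
    have : N / x ≠ 0 := (Nat.div_pos (Nat.divisor_le hx) (Nat.pos_of_mem_divisors hx)).ne'
    have h' := congrArg Nat.Partition.parts h
    simp only at h'
    have : x ∈ Multiset.replicate (N / x) x := Multiset.mem_replicate.2 ⟨this, rfl⟩
    rw [h'] at this
    exact Multiset.eq_of_mem_replicate this
  · intro p hp
    simp only [Finset.mem_filter, Finset.mem_univ, true_and, Finset.card_eq_one] at hp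
    obtain ⟨x, hx⟩ := hp
    have hmem : x ∈ p.parts := by rw [← Multiset.mem_toFinset, hx]; simp
    have hrep : p.parts = Multiset.replicate (Multiset.card p.parts) x := by
      rw [Multiset.eq_replicate]
      refine ⟨rfl, fun b hb => ?_⟩
      rw [← Multiset.mem_toFinset, hx] at hb
      simpa using hb
    have hs := p.parts_sum
    rw [hrep, Multiset.sum_replicate, smul_eq_mul] at hs
    have hx0 := p.parts_pos hmem
    refine ⟨x, by rw [Nat.mem_divisors]; exact ⟨⟨_, by rw [← hs]; ring⟩, hN⟩, ?_⟩
    ext1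
    simp only
    rw [hrep]
    congr 1
    rw [Nat.div_eq_of_eq_mul_left hx0 hs.symm]

theorem card_two (N : ℕ) :
    ((Finset.univ : Finset N.Partition).filter fun p => p.parts.toFinset.card = 2).card
      = (quads N).card := by
  symm
  refine Finset.card_bij (fun x hx => ⟨Multiset.replicate x.2.2.1 x.1 +
    Multiset.replicate x.2.2.2 (x.1 + x.2.1), ?_, ?_⟩) ?_ ?_ ?_
  · obtain ⟨a, c, m, k⟩ := x
    rw [mem_quads] at hx
    intro i hi
    rw [Multiset.mem_add] at hi
    rcases hi with hi | hi <;> rw [Multiset.eq_of_mem_replicate hi] <;> simp <;> omega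
  · obtain ⟨a, c, m, k⟩ := x
    rw [mem_quads] at hx
    simp only [Multiset.sum_add, Multiset.sum_replicate, smul_eq_mul]
    exact hx.2.2.2.2
  · rintro ⟨a, c, m, k⟩ hx
    rw [mem_quads] at hx
    simp only [Finset.mem_filter, Finset.mem_univ, true_and]
    rw [Multiset.toFinset_add, Multiset.toFinset_replicate, Multiset.toFinset_replicate,
      if_neg (by omega), if_neg (by omega)]
    rw [Finset.card_eq_two]
    exact ⟨a, a + c, by omega, rfl⟩
  · rintro ⟨a, c, m, k⟩ hx ⟨a', c', m', k'⟩ hy h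
    rw [mem_quads] at hx hy
    have h' := congrArg Nat.Partition.parts h
    simp only at h'
    have key : ∀ z, (if a = z then m else 0) + (if a + c = z then k else 0)
        = (if a' = z then m' else 0) + (if a' + c' = z then k' else 0) := by
      intro z
      have := congrArg (Multiset.count z) h'
      simpa only [Multiset.count_add, Multiset.count_replicate] using this
    obtain ⟨ha, hc, hm, hk, -⟩ := hx
    obtain ⟨ha', hc', hm', hk', -⟩ := hy
    have e1 : a' ≤ a := by
      by_contra hlt
      have := key a
      rw [if_pos rfl, if_neg (by omega : ¬ a' = a), if_neg (by omega : ¬ a' + c' = a)] at this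
      omega
    have e2 : a ≤ a' := by
      by_contra hlt
      have := key a'
      rw [if_pos (rfl : a' = a'), if_neg (by omega : ¬ a = a'),
        if_neg (by omega : ¬ a + c = a')] at this
      omega
    obtain rfl : a = a' := le_antisymm e2 e1
    have e3 : c = c' := by
      by_contra hne
      have := key (a + c)
      simp only [if_true, if_neg (by omega : ¬ a = a + c),
        if_neg (by omega : ¬ a + c' = a + c)] at this
      omega
    subst e3
    have k1 := key a
    simp only [if_true, if_neg (by omega : ¬ a + c = a)] at k1
    have k2 := key (a + c)
    simp only [if_true, if_neg (by omega : ¬ a = a + c)] at k2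
    obtain rfl : m = m' := by omega
    obtain rfl : k = k' := by omega
    rfl
  · intro p hp
    simp only [Finset.mem_filter, Finset.mem_univ, true_and, Finset.card_eq_two] at hp
    obtain ⟨x, y, hxy, hp⟩ := hp
    obtain ⟨x, y, hlt, hp⟩ : ∃ x y, x < y ∧ p.parts.toFinset = {x, y} := by
      rcases lt_or_gt_of_ne hxy with h | h
      · exact ⟨x, y, h, hp⟩
      · exact ⟨y, x, h, by rw [hp, Finset.pair_comm]⟩
    have hx : x ∈ p.parts := by rw [← Multiset.mem_toFinset, hp]; simp
    have hy : y ∈ p.parts := by rw [← Multiset.mem_toFinset, hp]; simp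
    have hrep : p.parts = Multiset.replicate (p.parts.count x) x
        + Multiset.replicate (p.parts.count y) y := by
      ext z
      simp only [Multiset.count_add, Multiset.count_replicate]
      by_cases h1 : x = z
      · subst h1
        simp [hlt.ne']
      · by_cases h2 : y = z
        · subst h2
          simp [hlt.ne]
        · have : z ∉ p.parts := by
            rw [← Multiset.mem_toFinset, hp]
            simp
            omega
          simp [h1, h2, this]
    have hs := p.parts_sum
    rw [hrep, Multiset.sum_add, Multiset.sum_replicate, Multiset.sum_replicate, smul_eq_mul,
      smul_eq_mul] at hs
    have e : x + (y - x) = y := by omega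
    refine ⟨(x, y - x, p.parts.count x, p.parts.count y), ?_, ?_⟩
    · rw [mem_quads, e]
      exact ⟨p.parts_pos hx, by omega, Multiset.count_pos.2 hx, Multiset.count_pos.2 hy, hs⟩
    · ext1
      simp only [e]
      exact hrep.symm

theorem op_eight_dvd (N : ℕ) (hN : Odd N) (hsq : ∀ x, x * x ≠ N) :
    8 ∣ overpartitionCount N := by
  have hN0 : N ≠ 0 := by rintro rfl; simp at hN
  have key : (overpartitionCount N : ZMod 8) =
      ((2 * N.divisors.card + 4 * (quads N).card : ℕ) : ZMod 8) := by
    rw [← card_one N hN0, ← card_two, Finset.card_filter, Finset.card_filter, Finset.mul_sum,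
      Finset.mul_sum, ← Finset.sum_add_distrib, overpartitionCount, Nat.cast_sum, Nat.cast_sum]
    refine Finset.sum_congr rfl fun p _ => ?_
    have hp : p.parts.toFinset.card ≠ 0 := by
      rw [Ne, Finset.card_eq_zero, Multiset.toFinset_eq_empty]
      intro h
      have := p.parts_sum
      rw [h] at this
      simp at this
      omega
    obtain h | h | h : p.parts.toFinset.card = 1 ∨ p.parts.toFinset.card = 2 ∨
      3 ≤ p.parts.toFinset.card := by omega
    · simp [h]
    · rw [h]; rfl
    · rw [if_neg (by omega), if_neg (by omega)]
      rw [ZMod.natCast_eq_natCast_iff]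
      simpa using (Nat.modEq_zero_iff_dvd.2 (pow_dvd_pow 2 h))
  rw [ZMod.natCast_eq_natCast_iff] at key
  have h1 := quads_parity N
  have h2 := divisors_card N hN hsq
  rw [(Nat.ModEq.dvd_iff key (dvd_refl 8))]
  omega

theorem overpartitionTuples_eight_n_five_mod_eight (t n : ℕ) :
    overpartitionTuples t (8 * n + 5) ≡ 0 [MOD 8] := by
  rw [Nat.modEq_zero_iff_dvd]
  have hodd : Odd (8 * n + 5) := ⟨4 * n + 2, by ring⟩
  have hsq : ∀ x, x * x ≠ 8 * n + 5 := by
    intro x hx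
    have h := congrArg (· % 8) hx
    simp only [Nat.mul_mod x x] at h
    have : x % 8 < 8 := Nat.mod_lt _ (by norm_num)
    generalize x % 8 = r at *
    interval_cases r <;> omega
  have h8 := op_eight_dvd _ hodd hsq
  obtain ⟨c, Q, h⟩ := pow_expand opS t
  rw [← op_series, ← tuples_series] at h
  have h' := congrArg (PowerSeries.coeff (8 * n + 5)) h
  have e : (1 : PowerSeries ℕ) + 2 * (t : PowerSeries ℕ) * opS
      + 4 * (c : PowerSeries ℕ) * (opS * opS) + 8 * Q
      = 1 + PowerSeries.C (2 * t) * opS + PowerSeries.C (4 * c) * (opS * opS)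
        + PowerSeries.C 8 * Q := by simp
  rw [e] at h'
  simp only [map_add, PowerSeries.coeff_C_mul, PowerSeries.coeff_mk, PowerSeries.coeff_one] at h'
  rw [h', if_neg (by omega), zero_add]
  obtain ⟨r, hr⟩ := coeff_sq_even opS _ hodd
  obtain ⟨s, hs⟩ := h8
  have hS : PowerSeries.coeff (8 * n + 5) opS = 4 * s := by
    rw [opS, PowerSeries.coeff_mk, if_neg (by omega), hs]
    omega
  rw [hr, hS]
  exact ⟨t * s + c * r + PowerSeries.coeff (8 * n + 5) Q, by ring⟩
end

section
/- For all nonnegative integers t and all n ≥ 0, the number of overpartition t-tuples satisfies p̄_t(16n+10) ≡ 0 (mod 8). -/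
open Finset PowerSeries

lemma ov_card_parity {α : Type*} [DecidableEq α] (s : Finset α) (g : α → α)
    (hm : ∀ a ∈ s, g a ∈ s) (hi : ∀ a ∈ s, g (g a) = a) :
    (s.card : ZMod 2) = ((s.filter (fun a => g a = a)).card : ZMod 2) := by
  have h : ∑ a ∈ s.filter (fun a => ¬ g a = a), (1 : ZMod 2) = 0 := by
    refine Finset.sum_involution (fun a _ => g a) ?_ ?_ ?_ ?_
    · intro a _; decide
    · intro a ha _; exact (mem_filter.1 ha).2
    · intro a ha
      have := mem_filter.1 ha
      refine mem_filter.2 ⟨hm a this.1, ?_⟩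
      rw [hi a this.1]; exact fun h => this.2 h.symm
    · intro a ha; exact hi a (mem_filter.1 ha).1
  rw [← Finset.card_filter_add_card_filter_not (s := s) (fun a => g a = a)]
  simp only [sum_const, nsmul_eq_mul, mul_one] at h
  push_cast
  rw [h, add_zero]

lemma ov_div_parity (n : ℕ) (hn : 0 < n) :
    (n.divisors.card : ZMod 2) = if IsSquare n then 1 else 0 := by
  rw [ov_card_parity n.divisors (fun d => n / d)]
  · split_ifs with h
    · obtain ⟨r, rfl⟩ := h
      have hr : 0 < r := Nat.pos_of_mul_pos_right hn
      have : (r * r).divisors.filter (fun a => r * r / a = a) = {r} := by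
        ext a
        simp only [mem_filter, Nat.mem_divisors, mem_singleton]
        constructor
        · rintro ⟨⟨h1, h2⟩, h3⟩
          have := Nat.div_mul_cancel h1
          rw [h3] at this
          exact Nat.mul_self_inj.1 this
        · rintro rfl
          exact ⟨⟨Dvd.intro _ rfl, hn.ne'⟩, Nat.mul_div_cancel _ hr⟩
      rw [this]; simp
    · have : n.divisors.filter (fun a => n / a = a) = ∅ := by
        ext a
        simp only [mem_filter, Nat.mem_divisors, notMem_empty, iff_false]
        rintro ⟨⟨h1, h2⟩, h3⟩
        have := Nat.div_mul_cancel h1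
        rw [h3] at this
        exact h ⟨a, this.symm⟩
      rw [this]; simp
  · intro a ha
    rw [Nat.mem_divisors] at *
    exact ⟨Nat.div_dvd_of_dvd ha.1, ha.2⟩
  · intro a ha
    rw [Nat.mem_divisors] at ha
    exact Nat.div_div_self ha.1 ha.2

def ovH (M : ℕ) : Finset ℕ := M.divisors.filter (fun u => u * u < M)

lemma ov_sum_pair (M : ℕ) (hM : ¬ IsSquare M) (f : ℕ → ℕ) :
    ∑ d ∈ M.divisors, f d = ∑ u ∈ ovH M, (f u + f (M / u)) := by
  have key : ∀ a, a ∈ M.divisors → a * (M / a) = M ∧ 0 < a ∧ 0 < M ∧ 0 < M / a := by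
    intro a ha
    have h1 := Nat.mem_divisors.1 ha
    have h2 := Nat.mul_div_cancel' h1.1
    refine ⟨h2, Nat.pos_of_mem_divisors ha, Nat.pos_of_ne_zero h1.2, ?_⟩
    rcases Nat.eq_zero_or_pos (M / a) with h | h
    · rw [h] at h2; omega
    · exact h
  rw [Finset.sum_add_distrib, ← Finset.sum_filter_add_sum_filter_not _ (fun u => u * u < M)]
  congr 1
  symm
  refine Finset.sum_bij' (fun a _ => M / a) (fun a _ => M / a) ?_ ?_ ?_ ?_ ?_
  · intro a ha
    obtain ⟨h1, h2⟩ := mem_filter.1 ha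
    obtain ⟨k1, k2, k3, k4⟩ := key a h1
    refine mem_filter.2 ⟨Nat.mem_divisors.2 ⟨Dvd.intro_left _ k1, by omega⟩, ?_⟩
    intro h
    nlinarith
  · intro a ha
    obtain ⟨h1, h2⟩ := mem_filter.1 ha
    obtain ⟨k1, k2, k3, k4⟩ := key a h1
    refine mem_filter.2 ⟨Nat.mem_divisors.2 ⟨Dvd.intro_left _ k1, by omega⟩, ?_⟩
    have : a * a ≠ M := fun h => hM ⟨a, h.symm⟩
    have h3 : M < a * a := by omega
    by_contra h
    have : M / a < a := by nlinarith
    nlinarith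
  · intro a ha
    obtain ⟨h1, h2⟩ := mem_filter.1 ha
    exact Nat.div_div_self (Nat.mem_divisors.1 h1).1 (Nat.mem_divisors.1 h1).2
  · intro a ha
    obtain ⟨h1, h2⟩ := mem_filter.1 ha
    exact Nat.div_div_self (Nat.mem_divisors.1 h1).1 (Nat.mem_divisors.1 h1).2
  · intro a ha; rfl

lemma ov_not_sq (n : ℕ) : ¬ IsSquare (8 * n + 5) := by
  rintro ⟨r, hr⟩
  have h : (r * r) % 8 = 5 := by omega
  rw [Nat.mul_mod] at h
  have : r % 8 < 8 := Nat.mod_lt _ (by norm_num)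
  interval_cases r % 8 <;> omega

lemma ov_card_div (n : ℕ) : (8 * n + 5).divisors.card = 2 * (ovH (8 * n + 5)).card := by
  have := ov_sum_pair _ (ov_not_sq n) (fun _ => 1)
  simp at this
  omega

lemma ov_pair_mod (n u v : ℕ) (h : u * v = 8 * n + 5) : (u + v) % 8 = 6 ∨ (u + v) % 8 = 2 := by
  have h : (u * v) % 8 = 5 := by omega
  rw [Nat.mul_mod] at h
  rw [Nat.add_mod]
  have h1 : u % 8 < 8 := Nat.mod_lt _ (by norm_num)
  have h2 : v % 8 < 8 := Nat.mod_lt _ (by norm_num)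
  interval_cases u % 8 <;> interval_cases v % 8 <;> omega

lemma ov_sigma (n : ℕ) : 4 ∣ (∑ d ∈ (8 * n + 5).divisors, d) + 2 * (ovH (8 * n + 5)).card := by
  have e : 2 * (ovH (8 * n + 5)).card = ∑ u ∈ ovH (8 * n + 5), 2 := by
    rw [Finset.sum_const, smul_eq_mul, mul_comm]
  rw [ov_sum_pair _ (ov_not_sq n) (fun d => d), e, ← Finset.sum_add_distrib]
  refine Finset.dvd_sum fun u hu => ?_
  have h1 := Nat.mem_divisors.1 (mem_filter.1 hu).1
  have := ov_pair_mod n _ _ (Nat.mul_div_cancel' h1.1)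
  omega

def ovT (M : ℕ) : Finset (ℕ × ℕ × ℕ) :=
  (range (M + 1) ×ˢ range (M + 1) ×ˢ range (M + 1)).filter
    (fun p => 0 < p.1 ∧ 0 < p.2.1 ∧ 0 < p.2.2 ∧ p.1 * p.1 + 4 * (p.2.1 * p.2.2) = M)

lemma ov_memT (M x y z : ℕ) : (x, y, z) ∈ ovT M ↔
    0 < x ∧ 0 < y ∧ 0 < z ∧ x * x + 4 * (y * z) = M := by
  simp only [ovT, mem_filter, mem_product, mem_range]
  constructor
  · exact fun h => h.2
  · rintro ⟨h1, h2, h3, h4⟩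
    refine ⟨⟨?_, ?_, ?_⟩, h1, h2, h3, h4⟩ <;> nlinarith

def ovZ (p : ℕ × ℕ × ℕ) : ℕ × ℕ × ℕ :=
  if p.1 + p.2.2 < p.2.1 then (p.1 + 2 * p.2.2, p.2.2, p.2.1 - p.1 - p.2.2)
  else if p.1 < 2 * p.2.1 then (2 * p.2.1 - p.1, p.2.1, p.1 + p.2.2 - p.2.1)
  else (p.1 - 2 * p.2.1, p.1 + p.2.2 - p.2.1, p.2.1)

lemma ov_T_ne (n x y z : ℕ) (h : (x, y, z) ∈ ovT (8 * n + 5)) : x + z ≠ y ∧ x ≠ 2 * y := by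
  obtain ⟨h1, h2, h3, h4⟩ := (ov_memT _ _ _ _).1 h
  constructor
  · rintro rfl
    exact ov_not_sq n ⟨x + 2 * z, by rw [← h4]; ring⟩
  · rintro rfl
    have : 2 * (2 * (y * y) + 2 * (y * z)) = 8 * n + 5 := by rw [← h4]; ring
    omega

lemma ov_Z_mem (n : ℕ) (p : ℕ × ℕ × ℕ) (h : p ∈ ovT (8 * n + 5)) : ovZ p ∈ ovT (8 * n + 5) := by
  obtain ⟨x, y, z⟩ := p
  obtain ⟨g1, g2⟩ := ov_T_ne n x y z h
  obtain ⟨h1, h2, h3, h4⟩ := (ov_memT _ _ _ _).1 h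
  simp only [ovZ]
  split_ifs with c1 c2
  · obtain ⟨w, rfl⟩ : ∃ w, y = x + z + w := ⟨y - x - z, by omega⟩
    have e : x + z + w - x - z = w := by omega
    rw [e, ov_memT]
    refine ⟨by omega, by omega, by omega, ?_⟩
    rw [← h4]; ring
  · rw [ov_memT]
    refine ⟨by omega, by omega, by omega, ?_⟩
    rw [← h4]
    zify [c2.le, (by omega : y ≤ x + z)]
    ring
  · rw [ov_memT]
    refine ⟨by omega, by omega, by omega, ?_⟩
    rw [← h4]
    zify [(by omega : 2 * y ≤ x), (by omega : y ≤ x + z)]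
    ring

lemma ov_Z_inv (n : ℕ) (p : ℕ × ℕ × ℕ) (h : p ∈ ovT (8 * n + 5)) : ovZ (ovZ p) = p := by
  obtain ⟨x, y, z⟩ := p
  obtain ⟨g1, g2⟩ := ov_T_ne n x y z h
  obtain ⟨h1, h2, h3, h4⟩ := (ov_memT _ _ _ _).1 h
  by_cases c1 : x + z < y
  · simp only [ovZ, c1, if_true]
    rw [if_neg (by omega), if_neg (by omega)]
    simp only [Prod.mk.injEq, true_and, and_true]; omega
  · by_cases c2 : x < 2 * y
    · simp only [ovZ, c1, c2, if_true, if_false]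
      rw [if_neg (by omega), if_pos (by omega)]
      simp only [Prod.mk.injEq, true_and, and_true]; omega
    · simp only [ovZ, c1, c2, if_false]
      rw [if_pos (by omega)]
      simp only [Prod.mk.injEq, true_and, and_true]; omega

lemma ov_Z_fixed (n : ℕ) :
    ((ovT (8 * n + 5)).filter (fun p => ovZ p = p)).card = (ovH (8 * n + 5)).card := by
  refine Finset.card_bij (fun p _ => p.1) ?_ ?_ ?_
  all_goals
    have key : ∀ p, p ∈ (ovT (8 * n + 5)).filter (fun p => ovZ p = p) →
      p.2.1 = p.1 ∧ 0 < p.1 ∧ 0 < p.2.2 ∧ p.1 * (p.1 + 4 * p.2.2) = 8 * n + 5 := by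
      rintro ⟨x, y, z⟩ hp
      obtain ⟨h, hf⟩ := mem_filter.1 hp
      obtain ⟨h1, h2, h3, h4⟩ := (ov_memT _ _ _ _).1 h
      have hxy : y = x := by
        simp only [ovZ] at hf
        split_ifs at hf <;> simp only [Prod.mk.injEq] at hf <;> omega
      subst hxy
      refine ⟨rfl, h1, h3, ?_⟩
      rw [← h4]; ring
  · intro p hp
    obtain ⟨h1, h2, h3, h4⟩ := key p hp
    refine mem_filter.2 ⟨Nat.mem_divisors.2 ⟨⟨_, h4.symm⟩, by omega⟩, ?_⟩
    rw [← h4]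
    nlinarith
  · intro p hp q hq hpq
    obtain ⟨h1, h2, h3, h4⟩ := key p hp
    obtain ⟨k1, k2, k3, k4⟩ := key q hq
    obtain ⟨x, y, z⟩ := p
    obtain ⟨x', y', z'⟩ := q
    simp only at *
    subst hpq h1 k1
    have := Nat.eq_of_mul_eq_mul_left h2 (h4.trans k4.symm)
    simp only [Prod.mk.injEq, true_and, and_true]; omega
  · intro u hu
    obtain ⟨h1, h2⟩ := mem_filter.1 hu
    have hd := Nat.mul_div_cancel' (Nat.mem_divisors.1 h1).1
    have hu0 := Nat.pos_of_mem_divisors h1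
    generalize (8 * n + 5) / u = v at hd
    have hlt : u < v := by
      by_contra h
      nlinarith
    have hm : (v - u) % 4 = 0 := by
      have h : (u * v) % 8 = 5 := by omega
      rw [Nat.mul_mod] at h
      have h3 : u % 8 < 8 := Nat.mod_lt _ (by norm_num)
      have h4 : v % 8 < 8 := Nat.mod_lt _ (by norm_num)
      have h5 : u % 8 % 4 = v % 8 % 4 := by
        interval_cases u % 8 <;> interval_cases v % 8 <;> omega
      omega
    obtain ⟨z, hz⟩ : ∃ z, v = u + 4 * z := ⟨(v - u) / 4, by omega⟩
    subst hz
    have hm : (u, u, z) ∈ ovT (8 * n + 5) := by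
      rw [ov_memT]
      refine ⟨hu0, hu0, by omega, ?_⟩
      rw [← hd]; ring
    refine ⟨(u, u, z), mem_filter.2 ⟨hm, ?_⟩, rfl⟩
    simp only [ovZ]
    rw [if_neg (by omega), if_pos (by omega)]
    simp only [Prod.mk.injEq, true_and, and_true]; omega

def ovR (M : ℕ) : Finset ℕ := (range M).filter (fun i => IsSquare i ∧ IsSquare (2 * M - i))

lemma ov_swap_fixed (n : ℕ) :
    ((ovT (8 * n + 5)).filter (fun p => (p.1, p.2.2, p.2.1) = p)).card
      = (ovR (8 * n + 5)).card := by
  refine Finset.card_bij (fun p _ => ((p.1 : ℤ) - 2 * p.2.1).natAbs * ((p.1 : ℤ) - 2 * p.2.1).natAbs) ?_ ?_ ?_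
  all_goals
    have key : ∀ p, p ∈ (ovT (8 * n + 5)).filter (fun p => (p.1, p.2.2, p.2.1) = p) →
      p.2.2 = p.2.1 ∧ 0 < p.1 ∧ 0 < p.2.1 ∧ p.1 * p.1 + 4 * (p.2.1 * p.2.1) = 8 * n + 5 := by
      rintro ⟨x, y, z⟩ hp
      obtain ⟨h, hf⟩ := mem_filter.1 hp
      obtain ⟨h1, h2, h3, h4⟩ := (ov_memT _ _ _ _).1 h
      simp only [Prod.mk.injEq] at hf
      obtain ⟨-, rfl, -⟩ := hf
      exact ⟨rfl, h1, h2, h4⟩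
  · intro p hp
    obtain ⟨h1, h2, h3, h4⟩ := key p hp
    obtain ⟨x, y, z⟩ := p
    simp only at *
    have e : ((x : ℤ) - 2 * y).natAbs * ((x : ℤ) - 2 * y).natAbs + 4 * (x * y) = 8 * n + 5 := by
      zify
      rw [abs_mul_abs_self]
      zify at h4
      rw [← h4]; ring
    have e2 : 0 < x * y := Nat.mul_pos h2 h3
    refine mem_filter.2 ⟨mem_range.2 (by omega), ⟨_, rfl⟩, ⟨x + 2 * y, ?_⟩⟩
    have : (x + 2 * y) * (x + 2 * y) = 8 * n + 5 + 4 * (x * y) := by rw [← h4]; ring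
    omega
  · intro p hp q hq hpq
    obtain ⟨h1, h2, h3, h4⟩ := key p hp
    obtain ⟨k1, k2, k3, k4⟩ := key q hq
    obtain ⟨x, y, z⟩ := p
    obtain ⟨x', y', z'⟩ := q
    simp only at *
    subst h1 k1
    have e1 := Nat.mul_self_inj.1 hpq
    have hs : x + 2 * z = x' + 2 * z' := by
      apply Nat.mul_self_inj.1
      zify at hpq h4 k4 ⊢
      rw [abs_mul_abs_self, abs_mul_abs_self] at hpq
      linarith
    have o1 : x % 2 = 1 := by
      rcases Nat.mod_two_eq_zero_or_one x with h | h
      · have : (x * x) % 2 = 0 := by rw [Nat.mul_mod, h]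
        omega
      · exact h
    have o2 : x' % 2 = 1 := by
      rcases Nat.mod_two_eq_zero_or_one x' with h | h
      · have : (x' * x') % 2 = 0 := by rw [Nat.mul_mod, h]
        omega
      · exact h
    simp only [Prod.mk.injEq]
    omega
  · intro i hi
    obtain ⟨h1, ⟨a, ha⟩, ⟨b, hb⟩⟩ := mem_filter.1 hi
    have h1 := mem_range.1 h1
    subst ha
    have hab : a * a + b * b = 16 * n + 10 := by omega
    have hlt : a < b := by by_contra h; nlinarith
    have hm : (a * a + b * b) % 16 = 10 := by omega
    have h8 : a % 2 = 1 ∧ b % 2 = 1 := by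
      have h : ((a % 4) * (a % 4) + (b % 4) * (b % 4)) % 4 = 2 := by
        have : (a * a + b * b) % 4 = 2 := by omega
        simpa [Nat.add_mod, Nat.mul_mod] using this
      have h3 : a % 4 < 4 := Nat.mod_lt _ (by norm_num)
      have h4 : b % 4 < 4 := Nat.mod_lt _ (by norm_num)
      rw [← Nat.mod_mod_of_dvd a (by norm_num : 2 ∣ 4), ← Nat.mod_mod_of_dvd b (by norm_num : 2 ∣ 4)]
      interval_cases a % 4 <;> interval_cases b % 4 <;> omega
    obtain ⟨c, rfl⟩ : ∃ c, b = a + 2 * c := ⟨(b - a) / 2, by omega⟩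
    have e1 : (a + c) * (a + c) + c * c = 8 * n + 5 := by
      have : 2 * ((a + c) * (a + c) + c * c) = 16 * n + 10 := by rw [← hab]; ring
      omega
    rcases Nat.even_or_odd' c with ⟨y, hy | hy⟩
    · subst hy
      refine ⟨(a + 2 * y, y, y), mem_filter.2 ⟨?_, rfl⟩, ?_⟩
      · rw [ov_memT]
        refine ⟨by omega, by omega, by omega, ?_⟩
        rw [← e1]; ring
      · have : (((a + 2 * y : ℕ) : ℤ) - 2 * y).natAbs = a := by omega
        simp only [this]
    · obtain ⟨w, hw⟩ : ∃ w, a + c = 2 * w := ⟨(a + c) / 2, by omega⟩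
      refine ⟨(c, w, w), mem_filter.2 ⟨?_, rfl⟩, ?_⟩
      · rw [ov_memT]
        refine ⟨by omega, by omega, by omega, ?_⟩
        rw [← e1, hw]; ring
      · have : ((c : ℤ) - 2 * w).natAbs = a := by omega
        simp only [this]

lemma ov_zagier (n : ℕ) :
    ((ovR (8 * n + 5)).card : ZMod 2) = ((ovH (8 * n + 5)).card : ZMod 2) := by
  rw [← ov_swap_fixed, ← ov_Z_fixed, ← ov_card_parity _ _ (ov_Z_mem n) (ov_Z_inv n),
    ← ov_card_parity _ (fun p : ℕ × ℕ × ℕ => (p.1, p.2.2, p.2.1))]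
  · rintro ⟨x, y, z⟩ h
    rw [ov_memT] at *
    refine ⟨h.1, h.2.2.1, h.2.1, ?_⟩
    rw [mul_comm z y]; exact h.2.2.2
  · intro a _; rfl

lemma ov_conv_half (f : ℕ → ℕ) (M : ℕ) :
    ∑ p ∈ HasAntidiagonal.antidiagonal (2 * M), f p.1 * f p.2
      = 2 * (∑ i ∈ range M, f i * f (2 * M - i)) + f M * f M := by
  rw [Finset.Nat.sum_antidiagonal_eq_sum_range_succ (fun i j => f i * f j)]
  rw [show (2 * M).succ = M + 1 + M by omega, Finset.sum_range_add, Finset.sum_range_succ,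
    ← Finset.sum_range_reflect (fun x => f (M + 1 + x) * f (2 * M - (M + 1 + x)))]
  have : ∑ j ∈ range M, f (M + 1 + (M - 1 - j)) * f (2 * M - (M + 1 + (M - 1 - j)))
      = ∑ i ∈ range M, f i * f (2 * M - i) := by
    refine Finset.sum_congr rfl fun j hj => ?_
    have := mem_range.1 hj
    rw [show M + 1 + (M - 1 - j) = 2 * M - j by omega, show 2 * M - (2 * M - j) = j by omega,
      mul_comm]
  rw [this, show 2 * M - M = M by omega]
  ring

lemma ov_conv_par (n : ℕ) :
    ((∑ i ∈ range (8 * n + 5), i.divisors.card * (2 * (8 * n + 5) - i).divisors.card : ℕ) : ZMod 2)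
     = ((ovR (8 * n + 5)).card : ZMod 2) := by
  rw [ovR, Finset.card_filter]
  push_cast
  refine Finset.sum_congr rfl fun i hi => ?_
  have := mem_range.1 hi
  rcases Nat.eq_zero_or_pos i with rfl | h0
  · rw [if_neg]
    · simp
    · rintro ⟨-, r, hr⟩
      have h : (r * r) % 4 = 2 := by omega
      rw [Nat.mul_mod] at h
      have : r % 4 < 4 := Nat.mod_lt _ (by norm_num)
      interval_cases r % 4 <;> omega
  · rw [ov_div_parity i h0, ov_div_parity _ (by omega)]
    split_ifs <;> simp_all

/-- main arithmetic fact -/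
lemma ov_arith (n : ℕ) : (4 : ℤ) ∣
    (2 * (16 * n + 10).divisors.card + (∑ p ∈ HasAntidiagonal.antidiagonal (16 * n + 10),
      p.1.divisors.card * p.2.divisors.card : ℕ) - (∑ d ∈ (16 * n + 10).divisors, d : ℕ) : ℤ) := by
  have hN : 16 * n + 10 = 2 * (8 * n + 5) := by ring
  have hc : Nat.Coprime 2 (8 * n + 5) := by
    rw [Nat.coprime_two_left, Nat.odd_iff]; omega
  rw [hN, ov_conv_half (fun i => i.divisors.card), hc.card_divisors_mul, Nat.Coprime.sum_divisors_mul hc]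
  have h2 : (Nat.divisors 2).card = 2 := by decide
  have h3 : ∑ d ∈ Nat.divisors 2, d = 3 := by decide
  have z := (ZMod.natCast_eq_natCast_iff' _ _ 2).1 ((ov_conv_par n).trans (ov_zagier n))
  have s := ov_sigma n
  rw [h2, h3, ov_card_div]
  generalize (∑ i ∈ range (8 * n + 5), i.divisors.card * (2 * (8 * n + 5) - i).divisors.card) = A at *
  generalize (ovH (8 * n + 5)).card = h at *
  generalize (∑ d ∈ (8 * n + 5).divisors, d) = S at *
  have : 2 * h * (2 * h) = 4 * (h * h) := by ring
  rw [this]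
  push_cast
  generalize (h : ℤ) * h = hh
  omega

noncomputable def ovP : ℤ⟦X⟧ := PowerSeries.mk fun n => (overpartitionCount n : ℤ)

lemma ov_tuples (t n : ℕ) : (overpartitionTuples t n : ℤ) = coeff n (ovP ^ t) := by
  have h : ovP ^ t = ∏ _i : Fin t, ovP := by simp
  rw [h, PowerSeries.coeff_prod, overpartitionTuples, ← Finset.piAntidiag_univ_fin_eq_antidiagonalTuple]
  push_cast
  symm
  refine Finset.sum_bij' (fun l _ => (l : Fin t → ℕ)) (fun l _ => Finsupp.equivFunOnFinite.symm l)
    ?_ ?_ ?_ ?_ ?_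
  · intro l hl
    simpa [mem_finsuppAntidiag] using hl
  · intro l hl
    simpa [mem_finsuppAntidiag] using hl
  · intro l hl; ext i; simp
  · intro l hl; ext i; simp
  · intro l hl
    simp [ovP]

/-- the series `∑_{j ≥ 1} q^{j (i+1)}` -/
noncomputable def ovx (i : ℕ) : ℤ⟦X⟧ := PowerSeries.mk fun n => if 0 < n ∧ (i + 1) ∣ n then 1 else 0

lemma ov_prod_expand {R : Type*} [CommRing R] (s : Finset ℕ) (x : ℕ → R) :
    ∃ e y : R, ∏ i ∈ s, (1 + 2 * x i) = 1 + 2 * (∑ i ∈ s, x i) + 4 * e + 8 * y ∧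
      (∑ i ∈ s, x i) ^ 2 = ∑ i ∈ s, x i ^ 2 + 2 * e := by
  classical
  induction s using Finset.induction_on with
  | empty => exact ⟨0, 0, by simp, by simp⟩
  | insert a s ha ih =>
    obtain ⟨e, y, h1, h2⟩ := ih
    refine ⟨e + x a * ∑ i ∈ s, x i, y + x a * e + 2 * x a * y, ?_, ?_⟩
    · rw [Finset.prod_insert ha, Finset.sum_insert ha, h1]; ring
    · rw [Finset.sum_insert ha, Finset.sum_insert ha, add_sq, h2]; ring

open scoped PowerSeries.WithPiTopology in
lemma ov_gen (N : ℕ) : ∃ m, N ≤ m ∧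
    (overpartitionCount N : ℤ) = coeff N (∏ i ∈ range m, (1 + 2 * ovx i)) := by
  let _ : TopologicalSpace ℤ := ⊥
  have _ : DiscreteTopology ℤ := ⟨rfl⟩
  have hp := Nat.Partition.hasProd_genFun (R := ℤ) (fun _ _ => 2)
  have hp : HasProd (fun i => 1 + 2 * ovx i) (Nat.Partition.genFun (R := ℤ) (fun _ _ => 2)) := by
    refine (congrArg (fun F : ℕ → ℤ⟦X⟧ =>
      HasProd F (Nat.Partition.genFun (R := ℤ) (fun _ _ => 2))) (funext fun i => ?_)).mpr hp
    congr 1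
    symm
    ext n
    rw [(Nat.Partition.summable_genFun_term (R := ℤ) (fun _ _ => 2) i).map_tsum _
      (WithPiTopology.continuous_coeff _ _)]
    have h2 : (2 : ℤ⟦X⟧) = C (2 : ℤ) := by simp
    rw [h2, coeff_C_mul]
    simp only [map_smul, coeff_X_pow, ovx, coeff_mk, smul_eq_mul]
    split_ifs with h
    · obtain ⟨h0, k, rfl⟩ := h
      obtain ⟨k, rfl⟩ : ∃ k', k = k' + 1 := ⟨k - 1, by
        rcases Nat.eq_zero_or_pos k with rfl | h
        · simp at h0
        · omega⟩
      rw [tsum_eq_single k]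
      · simp
      · intro j hj
        rw [if_neg]
        · simp
        · intro h
          have := Nat.eq_of_mul_eq_mul_left (Nat.succ_pos i) h
          omega
    · simp only [mul_zero]
      rw [← tsum_zero (β := ℕ)]
      congr 1
      ext j
      rw [if_neg]
      · simp
      · rintro rfl
        exact h ⟨by positivity, Dvd.intro _ rfl⟩
  have ht := hp.tendsto_prod_nat
  rw [WithPiTopology.tendsto_iff_coeff_tendsto] at ht
  have ht := ht N
  rw [nhds_discrete, Filter.tendsto_pure] at ht
  obtain ⟨m, hm, hm'⟩ := (ht.and (Filter.eventually_ge_atTop N)).exists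
  refine ⟨m, hm', ?_⟩
  rw [hm, Nat.Partition.coeff_genFun, overpartitionCount]
  push_cast
  refine Finset.sum_congr rfl fun p _ => ?_
  simp [Finsupp.prod]

lemma ov_coeff_E (m k : ℕ) (h : k ≤ m) :
    coeff k (∑ i ∈ range m, ovx i) = (k.divisors.card : ℤ) := by
  rw [map_sum]
  simp only [ovx, coeff_mk]
  rw [← Finset.sum_filter, Finset.sum_const, nsmul_eq_mul, mul_one]
  congr 1
  refine Finset.card_bij (fun i _ => i + 1) ?_ ?_ ?_
  · intro i hi
    obtain ⟨h1, h2, h3⟩ := mem_filter.1 hi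
    exact Nat.mem_divisors.2 ⟨h3, by omega⟩
  · intro i _ j _ h; omega
  · intro d hd
    obtain ⟨h1, h2⟩ := Nat.mem_divisors.1 hd
    have h3 := Nat.pos_of_mem_divisors hd
    have h4 := Nat.le_of_dvd (Nat.pos_of_ne_zero h2) h1
    refine ⟨d - 1, mem_filter.2 ⟨mem_range.2 (by omega), by omega, ?_⟩, by omega⟩
    rwa [Nat.sub_add_cancel h3]

lemma ov_coeff_sq (i N : ℕ) (hN : 0 < N) :
    coeff N (ovx i ^ 2) = if i + 1 ∣ N then ((N / (i + 1) : ℕ) : ℤ) - 1 else 0 := by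
  rw [sq, coeff_mul]
  simp only [ovx, coeff_mk]
  split_ifs with h
  · obtain ⟨k, rfl⟩ := h
    rw [Nat.mul_div_cancel_left _ (Nat.succ_pos i)]
    have hk : 0 < k := Nat.pos_of_mul_pos_left hN
    simp only [← ite_and, mul_ite, mul_one, mul_zero]
    rw [← Finset.sum_filter, Finset.sum_const, nsmul_eq_mul, mul_one]
    have : ((k : ℤ) - 1) = ((range (k - 1)).card : ℤ) := by
      rw [card_range]; omega
    rw [this]
    congr 1
    symm
    refine Finset.card_bij (fun j _ => ((i + 1) * (j + 1), (i + 1) * (k - (j + 1)))) ?_ ?_ ?_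
    · intro j hj
      have := mem_range.1 hj
      have h3 : 0 < k - (j + 1) := by omega
      refine mem_filter.2 ⟨?_, ?_⟩
      · rw [HasAntidiagonal.mem_antidiagonal, ← Nat.mul_add]
        congr 1; omega
      · refine ⟨⟨?_, ?_⟩, ?_, ?_⟩ <;> first | positivity | exact Dvd.intro _ rfl
    · intro j _ j' _ h
      have := Nat.eq_of_mul_eq_mul_left (Nat.succ_pos i) (Prod.mk.inj h).1
      omega
    · rintro ⟨a, b⟩ hab
      obtain ⟨h1, h2⟩ := mem_filter.1 hab
      simp only [HasAntidiagonal.mem_antidiagonal] at h1 h2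
      obtain ⟨⟨h4, v, rfl⟩, h3, u, rfl⟩ := h2
      have hu : 0 < u := Nat.pos_of_mul_pos_left h3
      have hv : 0 < v := Nat.pos_of_mul_pos_left h4
      rw [← Nat.mul_add] at h1
      have := Nat.eq_of_mul_eq_mul_left (Nat.succ_pos i) h1
      refine ⟨u - 1, mem_range.2 (by omega), ?_⟩
      rw [show u - 1 + 1 = u by omega, show k - u = v by omega]
  · refine Finset.sum_eq_zero fun p hp => ?_
    rw [HasAntidiagonal.mem_antidiagonal] at hp
    by_cases h1 : i + 1 ∣ p.1
    · have h2 : ¬ (i + 1 ∣ p.2) := fun h2 => h (hp ▸ dvd_add h1 h2)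
      simp [h2]
    · simp [h1]

lemma ov_coeff_P2 (m N : ℕ) (hN : 0 < N) (h : N ≤ m) :
    coeff N (∑ i ∈ range m, ovx i ^ 2) = ((∑ d ∈ N.divisors, d : ℕ) : ℤ) - N.divisors.card := by
  rw [map_sum, Finset.sum_congr rfl (fun i _ => ov_coeff_sq i N hN), ← Finset.sum_filter]
  have e : ((∑ d ∈ N.divisors, d : ℕ) : ℤ) - N.divisors.card
      = ∑ d ∈ N.divisors, (((N / d : ℕ) : ℤ) - 1) := by
    rw [Finset.sum_sub_distrib, ← Nat.cast_sum, Nat.sum_div_divisors N (fun d => d)]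
    simp
  rw [e]
  refine Finset.sum_bij (fun i _ => i + 1) ?_ ?_ ?_ ?_
  · intro i hi
    obtain ⟨h1, h2⟩ := mem_filter.1 hi
    exact Nat.mem_divisors.2 ⟨h2, by omega⟩
  · intro i _ j _ h; omega
  · intro d hd
    obtain ⟨h1, h2⟩ := Nat.mem_divisors.1 hd
    have h3 := Nat.pos_of_mem_divisors hd
    have h4 := Nat.le_of_dvd (Nat.pos_of_ne_zero h2) h1
    refine ⟨d - 1, mem_filter.2 ⟨mem_range.2 (by omega), ?_⟩, by omega⟩
    rwa [Nat.sub_add_cancel h3]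
  · intro i _; rfl

lemma ov_cmul (n : ℕ) (f : ℤ⟦X⟧) : coeff n (2 * f) = 2 * coeff n f ∧
    coeff n (4 * f) = 4 * coeff n f ∧ coeff n (8 * f) = 8 * coeff n f := by
  have h2 : (2 : ℤ⟦X⟧) = C (2 : ℤ) := by simp
  have h4 : (4 : ℤ⟦X⟧) = C (4 : ℤ) := by simp
  have h8 : (8 : ℤ⟦X⟧) = C (8 : ℤ) := by simp
  exact ⟨by rw [h2, coeff_C_mul], by rw [h4, coeff_C_mul], by rw [h8, coeff_C_mul]⟩

lemma ov_count_mod (N : ℕ) (hN : 0 < N) : ∃ e y : ℤ,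
    (overpartitionCount N : ℤ) = 2 * N.divisors.card + 4 * e + 8 * y ∧
    ((∑ p ∈ HasAntidiagonal.antidiagonal N, p.1.divisors.card * p.2.divisors.card : ℕ) : ℤ)
      = ((∑ d ∈ N.divisors, d : ℕ) : ℤ) - N.divisors.card + 2 * e := by
  obtain ⟨m, hm, h⟩ := ov_gen N
  obtain ⟨e, y, h1, h2⟩ := ov_prod_expand (range m) ovx
  refine ⟨coeff N e, coeff N y, ?_, ?_⟩
  · rw [h, h1]
    rw [map_add, map_add, map_add, (ov_cmul _ _).1, (ov_cmul _ _).2.1, (ov_cmul _ _).2.2,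
      ov_coeff_E m N hm]
    rw [coeff_one, if_neg hN.ne', zero_add]
  · have h3 := congrArg (coeff N) h2
    rw [map_add, (ov_cmul _ _).1, ov_coeff_P2 m N hN hm, sq, coeff_mul] at h3
    rw [← h3]
    push_cast
    refine Finset.sum_congr rfl fun p hp => ?_
    rw [HasAntidiagonal.mem_antidiagonal] at hp
    rw [ov_coeff_E m _ (by omega), ov_coeff_E m _ (by omega)]

lemma ov_pow_expand {R : Type*} [CommRing R] (S : R) (t : ℕ) :
    ∃ (c : ℤ) (y : R), (1 + 2 * S) ^ t = 1 + 2 * ((t : R) * S) + 4 * ((c : R) * (S * S)) + 8 * y := by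
  induction t with
  | zero => exact ⟨0, 0, by simp⟩
  | succ t ih =>
    obtain ⟨c, y, h⟩ := ih
    refine ⟨c + t, y + 2 * S * y + c * S ^ 3, ?_⟩
    rw [pow_succ, h]; push_cast; ring

/-- half of the nonconstant part of the overpartition series -/
noncomputable def ovS : ℤ⟦X⟧ :=
  PowerSeries.mk fun n => if n = 0 then 0 else (overpartitionCount n : ℤ) / 2

lemma ov_P_eq : ovP = 1 + 2 * ovS := by
  ext n
  rw [map_add, (ov_cmul _ _).1, coeff_one, ovP, ovS, coeff_mk, coeff_mk]
  split_ifs with h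
  · subst h; simp [overpartitionCount]
  · obtain ⟨e, y, h1, -⟩ := ov_count_mod n (by omega)
    omega

lemma ov_coeff_S2 (f : ℕ → ℤ) (M : ℕ) : (2 : ℤ) ∣
    (∑ p ∈ HasAntidiagonal.antidiagonal (2 * M), f p.1 * f p.2) - f M * f M := by
  rw [Finset.Nat.sum_antidiagonal_eq_sum_range_succ (fun i j => f i * f j)]
  rw [show (2 * M).succ = M + 1 + M by omega, Finset.sum_range_add, Finset.sum_range_succ,
    ← Finset.sum_range_reflect (fun x => f (M + 1 + x) * f (2 * M - (M + 1 + x)))]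
  have : ∑ j ∈ range M, f (M + 1 + (M - 1 - j)) * f (2 * M - (M + 1 + (M - 1 - j)))
      = ∑ i ∈ range M, f i * f (2 * M - i) := by
    refine Finset.sum_congr rfl fun j hj => ?_
    have := mem_range.1 hj
    rw [show M + 1 + (M - 1 - j) = 2 * M - j by omega, show 2 * M - (2 * M - j) = j by omega,
      mul_comm]
  rw [this, show 2 * M - M = M by omega]
  exact ⟨∑ i ∈ range M, f i * f (2 * M - i), by ring⟩

lemma ov_S2_even (n : ℕ) : (2 : ℤ) ∣ coeff (16 * n + 10) (ovS * ovS) := by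
  rw [coeff_mul, show 16 * n + 10 = 2 * (8 * n + 5) by ring]
  have h1 := ov_coeff_S2 (fun k => coeff k ovS) (8 * n + 5)
  have h2 : (2 : ℤ) ∣ coeff (8 * n + 5) ovS := by
    obtain ⟨e, y, h, -⟩ := ov_count_mod (8 * n + 5) (by omega)
    rw [ov_card_div] at h
    rw [ovS, coeff_mk, if_neg (by omega)]
    push_cast at h
    omega
  exact (dvd_sub_left (Dvd.dvd.mul_right h2 _)).1 h1

theorem overpartitionTuples_sixteen_n_ten_mod_eight (t n : ℕ) :
    overpartitionTuples t (16 * n + 10) ≡ 0 [MOD 8] := by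
  rw [Nat.modEq_zero_iff_dvd]
  zify
  obtain ⟨c, y, h⟩ := ov_pow_expand ovS t
  have ht : (t : ℤ⟦X⟧) = C (t : ℤ) := by simp
  have hc : (c : ℤ⟦X⟧) = C (c : ℤ) := by simp
  rw [ov_tuples, ov_P_eq, h, map_add, map_add, map_add, (ov_cmul _ _).1, (ov_cmul _ _).2.1,
    (ov_cmul _ _).2.2, coeff_one, if_neg (by omega), ht, hc, coeff_C_mul, coeff_C_mul]
  obtain ⟨w, hw⟩ := ov_S2_even n
  have hS : (4 : ℤ) ∣ coeff (16 * n + 10) ovS := by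
    obtain ⟨e, y, h1, h2⟩ := ov_count_mod (16 * n + 10) (by omega)
    have h3 := ov_arith n
    rw [ovS, coeff_mk, if_neg (by omega)]
    omega
  obtain ⟨v, hv⟩ := hS
  rw [hw, hv]
  exact ⟨t * v + c * w + coeff (16 * n + 10) y, by ring⟩
end

section
/- For all nonnegative integers t with t ≢ 1 (mod 4) (i.e., t = 4k, 4k+2, or 4k+3 for some nonnegative integer k) and all n ≥ 0, the number of overpartition t-tuples satisfies p̄_t(4n+3) ≡ 0 (mod 16). -/
open PowerSeries Finset
open scoped PowerSeries.WithPiTopology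

/-- A Shanks type finite version of the square identity of Gauss. -/
lemma gauss_finite {R : Type*} [CommRing R] (x : R) (I J a B : ℕ → R)
    (hI : ∀ k, I k * (1 - x ^ (k + 1)) = 1) (hJ : ∀ k, J k * (1 + x ^ (k + 1)) = 1)
    (a0 : a 0 = 1) (aS : ∀ k, a (k + 1) = a k * (1 + x ^ k) * I k)
    (b0 : B 0 = 1) (bS : ∀ k, B (k + 1) = B k * (1 - x ^ (k + 1)) * J k) (n : ℕ) :
    B n * ∑ s ∈ range (n + 1), (-1) ^ s * a s * x ^ (s * (n + 1)) =
      1 + 2 * ∑ s ∈ range n, (-1) ^ (s + 1) * x ^ ((s + 1) ^ 2) := by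
  have ha : ∀ k, a (k + 1) * (1 - x ^ (k + 1)) = a k * (1 + x ^ k) := by
    intro k
    rw [aS]; linear_combination (a k * (1 + x ^ k)) * hI k
  have hB : ∀ k, B (k + 1) * (1 + x ^ (k + 1)) = B k * (1 - x ^ (k + 1)) := by
    intro k
    rw [bS]; linear_combination (B k * (1 - x ^ (k + 1))) * hJ k
  have hBa : ∀ k, B k * (a (k + 1) * (1 - x ^ (k + 1))) = 2 := by
    intro k
    induction k with
    | zero => rw [ha, a0, b0]; norm_num
    | succ k ih =>
      rw [ha]
      linear_combination a (k + 1) * hB k + ih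
  induction n with
  | zero => simp [a0, b0]
  | succ n ih =>
    rw [sum_range_succ _ n, mul_add, ← add_assoc, ← ih]
    have key : (1 - x ^ (n + 1)) * ∑ s ∈ range (n + 1), (-1) ^ s * a s * x ^ (s * (n + 1 + 1))
        - (1 + x ^ (n + 1)) * ∑ s ∈ range (n + 1), (-1) ^ s * a s * x ^ (s * (n + 1))
        = (-1) ^ (n + 1) * (a (n + 1) * (1 - x ^ (n + 1))) * x ^ ((n + 1) * (n + 1)) := by
      have tel := sum_range_sub
        (fun s ↦ (-1) ^ s * (a s * (1 - x ^ s)) * x ^ (s * (n + 1))) (n + 1)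
      simp only [pow_zero, sub_self, mul_zero, zero_mul, sub_zero] at tel
      rw [← tel, mul_sum, mul_sum, ← sum_sub_distrib]
      refine sum_congr rfl fun s _ ↦ ?_
      rw [ha]
      ring
    have e : (1 + x ^ (n + 1)) * (B (n + 1) * ∑ s ∈ range (n + 1 + 1),
          (-1) ^ s * a s * x ^ (s * (n + 1 + 1)))
        = (1 + x ^ (n + 1)) * (B n * ∑ s ∈ range (n + 1), (-1) ^ s * a s * x ^ (s * (n + 1))
          + 2 * ((-1) ^ (n + 1) * x ^ ((n + 1) ^ 2))) := by
      rw [sum_range_succ _ (n + 1)]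
      have h2 := hBa n
      set T1 := ∑ s ∈ range (n + 1), (-1) ^ s * a s * x ^ (s * (n + 1 + 1))
      set T2 := ∑ s ∈ range (n + 1), (-1) ^ s * a s * x ^ (s * (n + 1))
      have e1 : x ^ ((n + 1) * (n + 1 + 1)) = x ^ ((n + 1) * (n + 1)) * x ^ (n + 1) := by ring
      have e2 : x ^ ((n + 1) ^ 2) = x ^ ((n + 1) * (n + 1)) := by ring
      rw [e1, e2]
      linear_combination (T1 + (-1) ^ (n + 1) * a (n + 1) *
        (x ^ ((n + 1) * (n + 1)) * x ^ (n + 1))) * hB n + B n * key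
        + (1 + x ^ (n + 1)) * (-1) ^ (n + 1) * x ^ ((n + 1) * (n + 1)) * h2
    have c := congrArg (J n * ·) e
    simp only [← mul_assoc, hJ, one_mul] at c
    simpa only [← mul_assoc] using c

/-- The generating function of overpartitions. -/
noncomputable def opGen : ℤ⟦X⟧ := PowerSeries.mk fun n ↦ (overpartitionCount n : ℤ)

/-- The local factor. -/
noncomputable def opFac (i : ℕ) : ℤ⟦X⟧ := 1 + ∑' j, (2 : ℤ) • X ^ ((i + 1) * (j + 1))

lemma hasProd_opGen : HasProd opFac opGen := by
  have h := Nat.Partition.hasProd_genFun (R := ℤ) (fun _ _ ↦ 2)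
  have e : opGen = Nat.Partition.genFun (R := ℤ) (fun _ _ ↦ 2) := by
    ext n
    simp [opGen, overpartitionCount, Finsupp.prod]
  rw [e]
  exact h

lemma opFac_mul (i : ℕ) : opFac i * (1 - X ^ (i + 1)) = 1 + X ^ (i + 1) := by
  have hc : (X ^ (i + 1) : ℤ⟦X⟧).constantCoeff = 0 := by simp
  have h := WithPiTopology.tsum_pow_mul_one_sub_of_constantCoeff_eq_zero hc
  have hs := WithPiTopology.summable_pow_of_constantCoeff_eq_zero hc
  have h2 : ∑' j, (2 : ℤ) • (X : ℤ⟦X⟧) ^ ((i + 1) * (j + 1))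
      = 2 * X ^ (i + 1) * ∑' j, (X ^ (i + 1) : ℤ⟦X⟧) ^ j := by
    rw [← hs.tsum_mul_left]
    congr 1; ext1 j
    rw [zsmul_eq_mul]; push_cast; ring
  rw [opFac, h2]
  linear_combination 2 * X ^ (i + 1) * h

lemma exists_gauss (M : ℕ) : ∃ N, (X : ℤ⟦X⟧) ^ M ∣
    opGen * (1 + 2 * ∑ s ∈ range N, (-1) ^ (s + 1) * X ^ ((s + 1) ^ 2)) - 1 := by
  have hI : ∀ k, ∃ u : ℤ⟦X⟧, u * (1 - X ^ (k + 1)) = 1 := fun k ↦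
    (isUnit_iff_constantCoeff.mpr (by simp)).exists_left_inv
  have hJ : ∀ k, ∃ u : ℤ⟦X⟧, u * (1 + X ^ (k + 1)) = 1 := fun k ↦
    (isUnit_iff_constantCoeff.mpr (by simp)).exists_left_inv
  choose I hI using hI
  choose J hJ using hJ
  let a : ℕ → ℤ⟦X⟧ := fun n ↦ ∏ k ∈ range n, ((1 + X ^ k) * I k)
  let B : ℕ → ℤ⟦X⟧ := fun n ↦ ∏ k ∈ range n, ((1 - X ^ (k + 1)) * J k)
  have hBQ : ∀ n, (∏ i ∈ range n, opFac i) * B n = 1 := by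
    intro n
    simp only [B]
    rw [← prod_mul_distrib]
    refine prod_eq_one fun k _ ↦ ?_
    linear_combination J k * opFac_mul k + hJ k
  have hev : ∃ N, M ≤ N ∧ ∀ d < M, coeff d (∏ i ∈ range N, opFac i) = coeff d opGen := by
    have ht := hasProd_opGen.tendsto_prod_nat
    rw [WithPiTopology.tendsto_iff_coeff_tendsto] at ht
    have h1 : ∀ d, ∀ᶠ N in Filter.atTop,
        coeff d (∏ i ∈ range N, opFac i) = coeff d opGen := fun d ↦ by
      have := ht d
      rw [nhds_discrete, Filter.tendsto_pure] at this
      exact this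
    have h2 := (Filter.eventually_all_finite (Set.finite_lt_nat M)).mpr (fun d _ ↦ h1 d)
    obtain ⟨N, h3, h4⟩ := (h2.and (Filter.eventually_ge_atTop M)).exists
    exact ⟨N, h4, h3⟩
  obtain ⟨N, hMN, hN⟩ := hev
  refine ⟨N, ?_⟩
  rw [← gauss_finite X I J a B hI hJ (by simp [a])
    (fun k ↦ by simp only [a]; rw [prod_range_succ]; ring) (by simp [B])
    (fun k ↦ by simp only [B]; rw [prod_range_succ]; ring) N, sum_range_succ']
  have d1 : (X : ℤ⟦X⟧) ^ M ∣ opGen - ∏ i ∈ range N, opFac i := by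
    rw [X_pow_dvd_iff]
    intro d hd
    rw [map_sub, hN d hd, sub_self]
  have d2 : (X : ℤ⟦X⟧) ^ M ∣
      ∑ s ∈ range N, (-1) ^ (s + 1) * a (s + 1) * X ^ ((s + 1) * (N + 1)) := by
    refine dvd_sum fun s _ ↦ Dvd.dvd.mul_left (pow_dvd_pow _ ?_) _
    nlinarith
  obtain ⟨u, hu⟩ := d1
  obtain ⟨v, hv⟩ := d2
  rw [hv]
  have ha0 : a 0 = 1 := by simp [a]
  refine ⟨u * B N + opGen * B N * v, ?_⟩
  rw [ha0]
  simp only [zero_mul, pow_zero, mul_one]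
  linear_combination B N * hu + hBQ N

lemma coeff_opGen_pow (t n : ℕ) :
    coeff n (opGen ^ t) = (overpartitionTuples t n : ℤ) := by
  have h := coeff_prod (fun _ : Fin t ↦ opGen) n Finset.univ
  rw [prod_const, card_univ, Fintype.card_fin] at h
  rw [h, overpartitionTuples, ← piAntidiag_univ_fin_eq_antidiagonalTuple]
  push_cast
  refine sum_bij' (fun l _ ↦ ⇑l) (fun c _ ↦ Finsupp.equivFunOnFinite.symm c) ?_ ?_ ?_ ?_ ?_
  · intro l hl; simpa using hl
  · intro c hc; simpa using hc
  · intro l hl; ext; simp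
  · intro c hc; ext; simp
  · intro l hl; simp [opGen]

lemma pow_expand_s9 {R : Type*} [CommRing R] (P S Z : R) (h : Z ∣ P * (1 + 2 * S) - 1) (t : ℕ) :
    ∃ y z : R, P ^ t = 1 - 2 * t * S + 4 * ((t + 1).choose 2 : ℕ) * S ^ 2
      - 8 * ((t + 2).choose 3 : ℕ) * S ^ 3 + 16 * y + Z * z := by
  obtain ⟨w, hw⟩ := h
  have hP : P = 1 - 2 * S + 4 * S ^ 2 - 8 * S ^ 3 + 16 * (P * S ^ 4)
      + Z * (w * (1 - 2 * S + 4 * S ^ 2 - 8 * S ^ 3)) := by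
    linear_combination (1 - 2 * S + 4 * S ^ 2 - 8 * S ^ 3) * hw
  generalize P * S ^ 4 = y0 at hP
  generalize w * (1 - 2 * S + 4 * S ^ 2 - 8 * S ^ 3) = z0 at hP
  induction t with
  | zero => exact ⟨0, 0, by simp⟩
  | succ t ih =>
    obtain ⟨y, z, ih⟩ := ih
    have c1 : (((t + 1 + 2).choose 3 : ℕ) : R) =
        ((t + 2).choose 3 : ℕ) + ((t + 1).choose 2 : ℕ) + t + 1 := by
      have : (t + 1 + 2).choose 3 = (t + 2).choose 3 + (t + 1).choose 2 + t + 1 := by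
        rw [Nat.choose_succ_succ' (t + 2) 2, Nat.choose_succ_succ' (t + 1) 1, Nat.choose_one_right]
        ring
      rw [this]; push_cast; ring
    have c2 : (((t + 1 + 1).choose 2 : ℕ) : R) = ((t + 1).choose 2 : ℕ) + t + 1 := by
      have : (t + 1 + 1).choose 2 = (t + 1).choose 2 + t + 1 := by
        rw [Nat.choose_succ_succ' (t + 1) 1, Nat.choose_one_right]
        ring
      rw [this]; push_cast; ring
    rw [c1, c2]
    generalize (((t + 2).choose 3 : ℕ) : R) = c at *
    generalize (((t + 1).choose 2 : ℕ) : R) = b at *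
    refine ⟨y * P + (1 - 2 * t * S + 4 * b * S ^ 2 - 8 * c * S ^ 3) * y0
      + S ^ 4 * (t + b + c) - 2 * S ^ 5 * (b + c) + 4 * S ^ 6 * c,
      z * P + (1 - 2 * t * S + 4 * b * S ^ 2 - 8 * c * S ^ 3) * z0, ?_⟩
    rw [pow_succ]
    push_cast
    linear_combination P * ih + (1 - 2 * t * S + 4 * b * S ^ 2 - 8 * c * S ^ 3) * hP

lemma even_choose (t : ℕ) (ht : t % 4 ≠ 1) : ∃ c, (t + 2).choose 3 = 2 * c := by
  have h : (t + 2).choose 3 * 6 = (t + 2) * (t + 1) * t := by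
    have := Nat.descFactorial_eq_factorial_mul_choose (t + 2) 3
    simp [Nat.descFactorial, Nat.factorial] at this
    linarith
  have h4 : 4 ∣ (t + 2) * (t + 1) * t := by
    apply Nat.dvd_of_mod_eq_zero
    have : t % 4 = 0 ∨ t % 4 = 2 ∨ t % 4 = 3 := by omega
    rcases this with h | h | h <;> simp [Nat.mul_mod, Nat.add_mod, h]
  obtain ⟨k, hk⟩ := h4
  exact ⟨(t + 2).choose 3 / 2, by omega⟩

lemma sq_mod_four (s : ℕ) : s ^ 2 % 4 = 0 ∨ s ^ 2 % 4 = 1 := by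
  have : s % 4 = 0 ∨ s % 4 = 1 ∨ s % 4 = 2 ∨ s % 4 = 3 := by omega
  rcases this with h | h | h | h <;> simp [Nat.pow_mod, h]

theorem overpartitionTuples_four_n_three_mod_sixteen (t n : ℕ) (ht : t % 4 ≠ 1) :
    overpartitionTuples t (4 * n + 3) ≡ 0 [MOD 16] := by
  obtain ⟨N, hN⟩ := exists_gauss (4 * n + 4)
  set S : ℤ⟦X⟧ := ∑ s ∈ range N, (-1) ^ (s + 1) * X ^ ((s + 1) ^ 2) with hS
  obtain ⟨y, z, h⟩ := pow_expand_s9 opGen S _ hN t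
  obtain ⟨c, hc⟩ := even_choose t ht
  have hpow : ∀ k m : ℕ, coeff (4 * n + 3) ((-1 : ℤ⟦X⟧) ^ k * X ^ m) =
      if 4 * n + 3 = m then (-1) ^ k else 0 := by
    intro k m
    have : ((-1 : ℤ⟦X⟧) ^ k) = C ((-1) ^ k) := by simp
    rw [this, coeff_C_mul, coeff_X_pow]
    split_ifs <;> simp
  have h1 : coeff (4 * n + 3) S = 0 := by
    rw [hS, map_sum]
    refine sum_eq_zero fun s _ ↦ ?_
    rw [hpow, if_neg]
    have := sq_mod_four (s + 1)
    omega
  have h2 : coeff (4 * n + 3) (S ^ 2) = 0 := by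
    rw [sq, hS, sum_mul_sum, map_sum]
    refine sum_eq_zero fun s _ ↦ ?_
    rw [map_sum]
    refine sum_eq_zero fun r _ ↦ ?_
    have : ((-1 : ℤ⟦X⟧) ^ (s + 1) * X ^ ((s + 1) ^ 2)) * ((-1) ^ (r + 1) * X ^ ((r + 1) ^ 2))
      = (-1) ^ (s + 1 + (r + 1)) * X ^ ((s + 1) ^ 2 + (r + 1) ^ 2) := by
      rw [pow_add, pow_add X]; ring
    rw [this, hpow, if_neg]
    have := sq_mod_four (s + 1)
    have := sq_mod_four (r + 1)
    omega
  have h3 : coeff (4 * n + 3) (X ^ (4 * n + 4) * z) = 0 :=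
    X_pow_dvd_iff.mp (dvd_mul_right _ z) _ (by omega)
  have e : opGen ^ t = 1 + C (-2 * t : ℤ) * S + C (4 * ((t + 1).choose 2 : ℕ) : ℤ) * S ^ 2
      + C (16 : ℤ) * (y - (c : ℤ⟦X⟧) * S ^ 3) + X ^ (4 * n + 4) * z := by
    rw [h, hc]
    simp only [map_mul, map_neg, map_natCast, map_ofNat]
    push_cast
    ring
  have f := congrArg (coeff (4 * n + 3)) e
  rw [coeff_opGen_pow] at f
  simp only [map_add, coeff_C_mul, h1, h2, h3, coeff_one] at f
  rw [Nat.modEq_zero_iff_dvd]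
  zify
  refine ⟨coeff (4 * n + 3) (y - (c : ℤ⟦X⟧) * S ^ 3), ?_⟩
  rw [f]; simp
end

section
/- For all nonnegative integers t with t ≢ 1 (mod 4) (i.e., t = 4k, 4k+2, or 4k+3 for some nonnegative integer k) and all n ≥ 0, the number of overpartition t-tuples satisfies p̄_t(8n+6) ≡ 0 (mod 16). -/
open PowerSeries Finset

namespace OverpartitionAux

/-- `P n = ∏_{i=1}^n (1 - X^{2i})`. -/
noncomputable def P (n : ℕ) : ℤ⟦X⟧ := ∏ i ∈ range n, (1 - X ^ (2 * i + 2))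

/-- `E n = ∏_{i=1}^n (1 - X^{2i-1})`. -/
noncomputable def E (n : ℕ) : ℤ⟦X⟧ := ∏ i ∈ range n, (1 - X ^ (2 * i + 1))

/-- Gaussian binomial coefficients in base `X^2`. -/
noncomputable def G : ℕ → ℕ → ℤ⟦X⟧
  | _, 0 => 1
  | 0, _ + 1 => 0
  | N + 1, k + 1 => G N k + X ^ (2 * k + 2) * G N (k + 1)

lemma G_zero (N : ℕ) : G N 0 = 1 := by cases N <;> rfl
lemma G_zero_succ (k : ℕ) : G 0 (k + 1) = 0 := rfl
lemma G_succ (N k : ℕ) : G (N + 1) (k + 1) = G N k + X ^ (2 * k + 2) * G N (k + 1) := rfl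

lemma G_eq_zero (N k : ℕ) (h : N < k) : G N k = 0 := by
  induction N generalizing k with
  | zero => obtain ⟨k, rfl⟩ := Nat.exists_eq_add_of_lt h; rw [show 0 + k + 1 = k + 1 by ring]; rfl
  | succ N ih =>
    obtain ⟨k, rfl⟩ : ∃ j, k = j + 1 := ⟨k - 1, by omega⟩
    rw [G_succ, ih k (by omega), ih (k + 1) (by omega)]; ring

lemma P_succ (n : ℕ) : P (n + 1) = P n * (1 - X ^ (2 * n + 2)) := prod_range_succ _ _
lemma P_zero : P 0 = 1 := by simp [P]

lemma G_mul (a b : ℕ) : G (a + b) a * (P a * P b) = P (a + b) := by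
  induction h : a + b generalizing a b with
  | zero =>
    obtain ⟨rfl, rfl⟩ : a = 0 ∧ b = 0 := by omega
    simp [P_zero, G_zero]
  | succ N ih =>
    rcases a with _ | a
    · obtain rfl : b = N + 1 := by omega
      simp [G_zero, P_zero]
    · have h1 := ih a b (by omega)
      rw [G_succ, P_succ a]
      rcases b with _ | b
      · obtain rfl : a = N := by omega
        rw [G_eq_zero a (a + 1) (by omega), P_succ]
        linear_combination (1 - X ^ (2 * a + 2)) * h1
      · have h2 := ih (a + 1) b (by omega)
        obtain rfl : N = a + b + 1 := by omega
        rw [P_succ a] at h2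
        rw [P_succ b] at h1
        rw [P_succ b, P_succ (a + b + 1)]
        linear_combination (1 - X ^ (2 * a + 2)) * h1 + X ^ (2 * a + 2) * (1 - X ^ (2 * b + 2)) * h2

lemma rothe (N : ℕ) (x y : ℤ⟦X⟧) :
    ∏ k ∈ range N, (y + x * X ^ (2 * k)) =
      ∑ k ∈ range (N + 1), X ^ (k * (k - 1)) * G N k * x ^ k * y ^ (N - k) := by
  induction N generalizing x with
  | zero => simp [G_zero]
  | succ N ih =>
    rw [prod_range_succ', show ∏ k ∈ range N, (y + x * X ^ (2 * (k + 1))) =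
      ∏ k ∈ range N, (y + (x * X ^ 2) * X ^ (2 * k)) from
        prod_congr rfl fun k _ => by ring, ih]
    rw [sum_range_succ' _ (N + 1)]
    have h1 : ∑ k ∈ range (N + 1), X ^ ((k + 1) * (k + 1 - 1)) * G (N + 1) (k + 1) * x ^ (k + 1)
        * y ^ (N + 1 - (k + 1)) =
        ∑ k ∈ range (N + 1), x * (X ^ (k * (k - 1)) * G N k * (x * X ^ 2) ^ k * y ^ (N - k)) +
        ∑ k ∈ range (N + 1), X ^ ((k + 1) * k) * G N (k + 1) * (x * X ^ 2) ^ (k + 1)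
          * y ^ (N - k) := by
      rw [← sum_add_distrib]
      refine sum_congr rfl fun k _ => ?_
      rw [G_succ, show N + 1 - (k + 1) = N - k by omega]
      have : (X : ℤ⟦X⟧) ^ ((k + 1) * (k + 1 - 1)) = X ^ (k * (k - 1)) * X ^ (2 * k) := by
        rw [← pow_add]; congr 1; rcases k with _ | k
        · rfl
        · simp; ring
      have h' : (X : ℤ⟦X⟧) ^ ((k + 1) * k) = X ^ ((k + 1) * (k + 1 - 1)) := by simp
      rw [h', this]; ring
    have h2 : ∑ k ∈ range (N + 1), X ^ ((k + 1) * k) * G N (k + 1) * (x * X ^ 2) ^ (k + 1)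
          * y ^ (N - k) + y ^ (N + 1) =
        y * ∑ k ∈ range (N + 1), X ^ (k * (k - 1)) * G N k * (x * X ^ 2) ^ k * y ^ (N - k) := by
      rw [sum_range_succ, G_eq_zero N (N + 1) (by omega), sum_range_succ', mul_add, mul_sum]
      simp only [G_zero]
      rw [mul_zero, zero_mul, zero_mul, add_zero]
      congr 1
      · refine sum_congr rfl fun k hk => ?_
        have : k < N := mem_range.1 hk
        obtain ⟨d, rfl⟩ : ∃ d, N = k + 1 + d := ⟨N - (k + 1), by omega⟩
        rw [show k + 1 + d - k = d + 1 by omega, show k + 1 + d - (k + 1) = d by omega,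
          Nat.add_sub_cancel]
        ring
      · simp [pow_succ']
    rw [h1, ← mul_sum]
    simp only [G_zero, Nat.sub_zero, pow_zero, mul_one, zero_mul, one_mul, mul_zero]
    linear_combination -h2

lemma prod_odd_X (n : ℕ) : ∏ k ∈ range n, (X : ℤ⟦X⟧) ^ (2 * k + 1) = X ^ (n * n) := by
  induction n with
  | zero => simp
  | succ n ih => rw [prod_range_succ, ih, ← pow_add]; congr 1; ring

lemma prod_side (n : ℕ) :
    ∏ k ∈ range (2 * n), ((X : ℤ⟦X⟧) ^ (2 * n) + (-X) * X ^ (2 * k)) =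
      X ^ (3 * n * n) * ((-1) ^ n * E n ^ 2) := by
  rw [two_mul n, prod_range_add]
  have h1 : ∏ k ∈ range n, ((X : ℤ⟦X⟧) ^ (n + n) + (-X) * X ^ (2 * k)) =
      X ^ (n * n) * ((-1) ^ n * E n) := by
    rw [← prod_odd_X, E, ← prod_range_reflect (fun i => (1 : ℤ⟦X⟧) - X ^ (2 * i + 1)) n]
    have : ((-1 : ℤ⟦X⟧)) ^ n = ∏ k ∈ range n, (-1) := by simp
    rw [this, ← prod_mul_distrib, ← prod_mul_distrib]
    refine prod_congr rfl fun k hk => ?_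
    have : k < n := mem_range.1 hk
    obtain ⟨d, rfl⟩ : ∃ d, n = k + 1 + d := ⟨n - (k + 1), by omega⟩
    rw [show k + 1 + d - 1 - k = d by omega]
    ring
  have h2 : ∏ k ∈ range n, ((X : ℤ⟦X⟧) ^ (n + n) + (-X) * X ^ (2 * (n + k))) =
      X ^ (2 * n * n) * E n := by
    have : (X : ℤ⟦X⟧) ^ (2 * n * n) = ∏ k ∈ range n, X ^ (2 * n) := by simp [← pow_mul]
    rw [this, E, ← prod_mul_distrib]
    refine prod_congr rfl fun k hk => ?_
    ring
  rw [h1, h2]; ring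

/-- Finite Jacobi triple product at `z = -1`. -/
lemma finite_jacobi (n : ℕ) :
    E n ^ 2 = G (2 * n) n + ∑ j ∈ range n, (-1) ^ (j + 1) * X ^ ((j + 1) ^ 2) *
      (G (2 * n) (n + (j + 1)) + G (2 * n) (n - (j + 1))) := by
  have h := rothe (2 * n) (-X) (X ^ (2 * n))
  rw [prod_side] at h
  have hterm : ∀ k ∈ range (2 * n + 1), (X : ℤ⟦X⟧) ^ (k * (k - 1)) * G (2 * n) k * (-X) ^ k *
      (X ^ (2 * n)) ^ (2 * n - k) = X ^ (k ^ 2 + 2 * n * (2 * n - k)) * ((-1) ^ k * G (2 * n) k) := by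
    intro k _
    have : (X : ℤ⟦X⟧) ^ (k ^ 2) = X ^ (k * (k - 1)) * X ^ k := by
      rw [← pow_add]; congr 1; rcases k with _ | k
      · rfl
      · simp; ring
    rw [pow_add, this, ← pow_mul, neg_pow]; ring
  rw [sum_congr rfl hterm, show 2 * n + 1 = n + (n + 1) by ring, sum_range_add,
    sum_range_succ', ← sum_range_reflect _ n] at h
  have hs : (-1 : ℤ⟦X⟧) ^ n * (-1) ^ n = 1 := by rw [← mul_pow]; simp
  have hX : (X : ℤ⟦X⟧) ^ (3 * n * n) * (-1) ^ n ≠ 0 := by simp [X_ne_zero]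
  apply mul_left_cancel₀ hX
  rw [mul_assoc, h, mul_add, mul_sum, add_zero, ← add_assoc, ← sum_add_distrib, add_comm]
  congr 1
  · rw [show n ^ 2 + 2 * n * (2 * n - n) = 3 * n * n by
      rw [show 2 * n - n = n by omega]; ring]
    ring
  · refine sum_congr rfl fun j hj => ?_
    have : j < n := mem_range.1 hj
    obtain ⟨d, rfl⟩ : ∃ d, n = j + 1 + d := ⟨n - (j + 1), by omega⟩
    rw [show j + 1 + d - 1 - j = d by omega, show j + 1 + d - (j + 1) = d by omega]
    rw [show 2 * (j + 1 + d) - d = 2 * (j + 1) + d by omega,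
      show 2 * (j + 1 + d) - (j + 1 + d + (j + 1)) = d by omega]
    have e1 : d ^ 2 + 2 * (j + 1 + d) * (2 * (j + 1) + d) =
      3 * (j + 1 + d) * (j + 1 + d) + (j + 1) ^ 2 := by ring
    have e2 : (j + 1 + d + (j + 1)) ^ 2 + 2 * (j + 1 + d) * d =
      3 * (j + 1 + d) * (j + 1 + d) + (j + 1) ^ 2 := by ring
    have e3 : (-1 : ℤ⟦X⟧) ^ d = (-1) ^ (j + 1 + d) * (-1) ^ (j + 1) := by
      rw [← pow_add, show j + 1 + d + (j + 1) = 2 * (j + 1) + d by ring, pow_add, pow_mul]; simp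
    rw [e1, e2, e3, pow_add, pow_add (-1) (j + 1 + d) (j + 1)]; ring

lemma P_sub (a b : ℕ) : (X : ℤ⟦X⟧) ^ (2 * a + 2) ∣ P (a + b) - P a := by
  induction b with
  | zero => simp
  | succ b ih =>
    rw [← add_assoc, P_succ, show P (a + b) * (1 - X ^ (2 * (a + b) + 2)) - P a =
      (P (a + b) - P a) - X ^ (2 * a + 2) * (X ^ (2 * b) * P (a + b)) by ring]
    exact dvd_sub ih (dvd_mul_right _ _)

lemma P_sq (a j : ℕ) :
    (X : ℤ⟦X⟧) ^ (2 * (a + j) + 1) ∣ X ^ (j ^ 2) * (P (a + j) ^ 2 - P (a + j + j) * P a) := by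
  have h1 : (X : ℤ⟦X⟧) ^ (2 * a + 2) ∣ P (a + j) ^ 2 - P (a + j + j) * P a := by
    have h2 := (pow_dvd_pow (X : ℤ⟦X⟧) (by omega : 2 * a + 2 ≤ 2 * (a + j) + 2)).trans
      (P_sub (a + j) j)
    rw [show P (a + j) ^ 2 - P (a + j + j) * P a =
      P (a + j) * (P (a + j) - P a) - P a * (P (a + j + j) - P (a + j)) by ring]
    exact dvd_sub ((P_sub a j).mul_left _) (h2.mul_left _)
  have h3 := mul_dvd_mul_left ((X : ℤ⟦X⟧) ^ (j ^ 2)) h1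
  rw [← pow_add] at h3
  refine (pow_dvd_pow X ?_).trans h3
  zify; nlinarith [sq_nonneg ((j : ℤ) - 1)]

lemma term_cong (n j : ℕ) (hj : j ≤ n) :
    (X : ℤ⟦X⟧) ^ (2 * n + 1) ∣ X ^ (j ^ 2) * (P n ^ 2 * G (2 * n) (n + j) - P (2 * n)) ∧
    (X : ℤ⟦X⟧) ^ (2 * n + 1) ∣ X ^ (j ^ 2) * (P n ^ 2 * G (2 * n) (n - j) - P (2 * n)) := by
  obtain ⟨a, rfl⟩ : ∃ a, n = a + j := ⟨n - j, by omega⟩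
  have h := P_sq a j
  have g1 := G_mul (a + j + j) a
  have g2 := G_mul a (a + j + j)
  rw [show a + j + j + a = 2 * (a + j) by ring] at g1
  rw [show a + (a + j + j) = 2 * (a + j) by ring] at g2
  rw [Nat.add_sub_cancel]
  constructor
  · convert! h.mul_right (G (2 * (a + j)) (a + j + j)) using 1
    linear_combination X ^ (j ^ 2) * g1
  · convert! h.mul_right (G (2 * (a + j)) a) using 1
    linear_combination X ^ (j ^ 2) * g2

/-- `S = ∑_{j ≥ 1} (-1)^j X^{j^2}`. -/
noncomputable def S : ℤ⟦X⟧ := by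
  classical
  exact PowerSeries.mk fun m => if IsSquare m ∧ m ≠ 0 then (-1) ^ m else 0

lemma S_trunc (n : ℕ) :
    (X : ℤ⟦X⟧) ^ (2 * n + 1) ∣ S - ∑ j ∈ range n, (-1) ^ (j + 1) * X ^ ((j + 1) ^ 2) := by
  classical
  rw [X_pow_dvd_iff]
  intro d hd
  have hc : ∀ j : ℕ, coeff d ((-1 : ℤ⟦X⟧) ^ (j + 1) * X ^ ((j + 1) ^ 2)) =
      if d = (j + 1) ^ 2 then (-1) ^ (j + 1) else 0 := by
    intro j
    have : (-1 : ℤ⟦X⟧) ^ (j + 1) = C ((-1) ^ (j + 1)) := by simp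
    rw [this, coeff_C_mul, coeff_X_pow]; simp
  rw [map_sub, map_sum, S, coeff_mk]
  simp only [hc]
  split_ifs with h
  · obtain ⟨⟨r, rfl⟩, h0⟩ := h
    have hr : r ≠ 0 := by rintro rfl; simp at h0
    obtain ⟨r, rfl⟩ : ∃ s, r = s + 1 := ⟨r - 1, by omega⟩
    rw [sum_eq_single r]
    · rw [if_pos (by ring), pow_mul]
      rcases neg_one_pow_eq_or ℤ (r + 1) with h | h <;> simp only [h]
      · simp
      · simp
    · intro b _ hb
      rw [if_neg]
      intro h
      rw [← sq] at h
      have := Nat.pow_left_injective (n := 2) (by norm_num) h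
      omega
    · intro hr
      rw [mem_range, not_lt] at hr
      nlinarith
  · rw [sum_eq_zero, sub_zero]
    intro j _
    rw [if_neg]
    rintro rfl
    exact h ⟨⟨j + 1, sq _⟩, by positivity⟩

lemma gauss_trunc (n : ℕ) :
    (X : ℤ⟦X⟧) ^ (2 * n + 1) ∣ (P n * E n) ^ 2 - P (2 * n) * (1 + 2 * S) := by
  have h0 := (term_cong n 0 (by omega)).1
  have h1 : (X : ℤ⟦X⟧) ^ (2 * n + 1) ∣ ∑ j ∈ range n, (-1) ^ (j + 1) *
      (X ^ ((j + 1) ^ 2) * (P n ^ 2 * G (2 * n) (n + (j + 1)) - P (2 * n)) +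
      X ^ ((j + 1) ^ 2) * (P n ^ 2 * G (2 * n) (n - (j + 1)) - P (2 * n))) := by
    refine dvd_sum fun j hj => ?_
    have h := term_cong n (j + 1) (by have := mem_range.1 hj; omega)
    exact (dvd_add h.1 h.2).mul_left _
  have h2 := (S_trunc n).mul_left (2 * P (2 * n))
  have h3 := dvd_sub (dvd_add h0 h1) h2
  convert! h3 using 1
  rw [mul_pow, finite_jacobi]
  simp only [add_zero, mul_add, mul_sub, sum_add_distrib, sum_sub_distrib, mul_sum]
  have e1 : ∀ j : ℕ, P n ^ 2 * ((-1) ^ (j + 1) * X ^ ((j + 1) ^ 2) * G (2 * n) (n + (j + 1))) =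
    (-1) ^ (j + 1) * (X ^ ((j + 1) ^ 2) * (P n ^ 2 * G (2 * n) (n + (j + 1)))) := by
    intro j; ring
  have e2 : ∀ j : ℕ, P n ^ 2 * ((-1) ^ (j + 1) * X ^ ((j + 1) ^ 2) * G (2 * n) (n - (j + 1))) =
    (-1) ^ (j + 1) * (X ^ ((j + 1) ^ 2) * (P n ^ 2 * G (2 * n) (n - (j + 1)))) := by
    intro j; ring
  have e3 : ∑ j ∈ range n, 2 * P (2 * n) * ((-1) ^ (j + 1) * X ^ ((j + 1) ^ 2)) =
    2 * ∑ j ∈ range n, (-1) ^ (j + 1) * (X ^ ((j + 1) ^ 2) * P (2 * n)) := by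
    rw [mul_sum]; exact sum_congr rfl fun j _ => by ring
  simp only [e1, e2, e3]
  ring

/-- generating function of overpartitions -/
noncomputable def F : ℤ⟦X⟧ := PowerSeries.mk fun n => (overpartitionCount n : ℤ)

section Top
open Filter Topology PowerSeries.WithPiTopology

lemma P_two_mul (n : ℕ) :
    P (2 * n) = (∏ i ∈ range (2 * n), (1 - X ^ (i + 1))) * ∏ i ∈ range (2 * n), (1 + X ^ (i + 1)) := by
  rw [P, ← prod_mul_distrib]
  exact prod_congr rfl fun i _ => by ring

lemma PE (n : ℕ) : P n * E n = ∏ i ∈ range (2 * n), (1 - X ^ (i + 1)) := by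
  induction n with
  | zero => simp [P, E]
  | succ n ih =>
    rw [show 2 * (n + 1) = 2 * n + 1 + 1 by ring, prod_range_succ, prod_range_succ, ← ih,
      P_succ, E, prod_range_succ, ← E]; ring

lemma F_hasProd : HasProd (fun i : ℕ => (1 : ℤ⟦X⟧) + ∑' j : ℕ, (2 : ℤ) • X ^ ((i + 1) * (j + 1))) F := by
  convert! Nat.Partition.hasProd_genFun (fun _ _ => (2 : ℤ)) using 1
  ext n
  simp [F, overpartitionCount, Finsupp.prod]

lemma factor (i : ℕ) : ((1 : ℤ⟦X⟧) + ∑' j : ℕ, (2 : ℤ) • X ^ ((i + 1) * (j + 1))) * (1 - X ^ (i + 1))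
    = 1 + X ^ (i + 1) := by
  have h := tsum_pow_mul_one_sub_of_constantCoeff_eq_zero (R := ℤ) (f := X ^ (i + 1)) (by simp)
  have hs := summable_pow_of_constantCoeff_eq_zero (R := ℤ) (f := X ^ (i + 1)) (by simp)
  have e : ∑' j : ℕ, (2 : ℤ) • (X : ℤ⟦X⟧) ^ ((i + 1) * (j + 1)) =
      (2 * X ^ (i + 1)) * ∑' j : ℕ, (X ^ (i + 1)) ^ j := by
    rw [← hs.tsum_mul_left]
    refine tsum_congr fun j => ?_
    rw [zsmul_eq_mul]; push_cast; ring
  rw [e]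
  linear_combination 2 * X ^ (i + 1) * h

lemma F_theta : F * (1 + 2 * S) = 1 := by
  have hA := (multipliable_one_sub_X_pow ℤ).hasProd
  set A : ℤ⟦X⟧ := ∏' n : ℕ, (1 - X ^ (n + 1)) with hAdef
  have hB := F_hasProd.mul hA
  simp only [factor] at hB
  have h2 : Tendsto (fun n : ℕ => 2 * n) atTop atTop :=
    tendsto_id.const_mul_atTop' (by norm_num)
  have tA := hA.tendsto_prod_nat.comp h2
  have tB := hB.tendsto_prod_nat.comp h2
  have t1 := (tA.mul tA).sub ((tA.mul tB).mul_const (1 + 2 * S))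
  have t0 : Tendsto (fun n : ℕ => (P n * E n) ^ 2 - P (2 * n) * (1 + 2 * S)) atTop (𝓝 0) := by
    rw [tendsto_iff_coeff_tendsto]
    intro d
    refine tendsto_atTop_of_eventually_const (i₀ := d) fun n hn => ?_
    rw [X_pow_dvd_iff.1 (gauss_trunc n) d (by omega)]; simp
  have hlim : A * A - A * (F * A) * (1 + 2 * S) = 0 := by
    refine tendsto_nhds_unique t1 (t0.congr fun n => ?_)
    simp only [Function.comp, P_two_mul, PE]; ring
  have hA0 : A ≠ 0 := tprod_one_sub_X_pow_ne_zero ℤ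
  have : A * A * (F * (1 + 2 * S)) = A * A * 1 := by linear_combination -hlim
  exact mul_left_cancel₀ (mul_ne_zero hA0 hA0) this

end Top

lemma coeff_F_pow (t n : ℕ) : (overpartitionTuples t n : ℤ) = coeff n (F ^ t) := by
  have : F ^ t = ∏ _i : Fin t, F := by simp
  rw [this, coeff_prod, overpartitionTuples]
  push_cast
  symm
  refine sum_bij (fun f _ => ⇑f) ?_ ?_ ?_ ?_
  · intro f hf
    rw [mem_finsuppAntidiag] at hf
    exact Nat.mem_antidiagonalTuple.2 hf.1
  · intro a _ b _ h; exact DFunLike.coe_injective h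
  · intro b hb
    refine ⟨Finsupp.equivFunOnFinite.symm b, ?_, by simp⟩
    rw [mem_finsuppAntidiag]
    exact ⟨by simpa using Nat.mem_antidiagonalTuple.1 hb, by simp⟩
  · intro a _; simp [F]

lemma sq_mod (d : ℕ) (h : coeff d S ≠ 0) : d % 8 = 0 ∨ d % 8 = 1 ∨ d % 8 = 4 := by
  rw [S, coeff_mk] at h
  by_cases hs : IsSquare d ∧ d ≠ 0
  · obtain ⟨⟨r, rfl⟩, -⟩ := hs
    have : r % 8 < 8 := Nat.mod_lt _ (by norm_num)
    rw [Nat.mul_mod]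
    interval_cases r % 8 <;> simp
  · simp [hs] at h

lemma coeff_S (n : ℕ) : coeff (8 * n + 6) S = 0 := by
  by_contra h
  have := sq_mod _ h
  omega

lemma coeff_S_sq (n : ℕ) : coeff (8 * n + 6) (S ^ 2) = 0 := by
  rw [sq, coeff_mul]
  refine sum_eq_zero fun p hp => ?_
  rw [HasAntidiagonal.mem_antidiagonal] at hp
  by_contra h
  have h1 := sq_mod _ (left_ne_zero_of_mul h)
  have h2 := sq_mod _ (right_ne_zero_of_mul h)
  omega

lemma binom_expand (m : ℕ) : ∃ W : ℤ⟦X⟧, (1 + 2 * S) ^ m =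
    1 + (2 * m : ℤ) • S + (4 * m.choose 2 : ℤ) • S ^ 2 + (8 * m.choose 3 : ℤ) • S ^ 3 +
      (16 : ℤ) • W := by
  induction m with
  | zero => exact ⟨0, by simp⟩
  | succ m ih =>
    obtain ⟨W, hW⟩ := ih
    refine ⟨W + 2 * S * W + m.choose 3 * S ^ 4, ?_⟩
    rw [pow_succ, hW, Nat.choose_succ_succ' m 1, Nat.choose_succ_succ' m 2]
    simp only [zsmul_eq_mul, Nat.choose_one_right]
    push_cast
    ring

lemma choose_even (t : ℕ) (ht : t % 4 ≠ 1) : 2 ∣ (7 * t).choose 3 := by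
  have key : ∀ k : ℕ, (k + 4).choose 3 % 2 = k.choose 3 % 2 := by
    intro k
    simp only [Nat.choose_succ_succ', Nat.choose_zero_right, Nat.choose_one_right]
    simp [Nat.choose_succ_succ']
    omega
  have key2 : ∀ a k : ℕ, (k + 4 * a).choose 3 % 2 = k.choose 3 % 2 := by
    intro a k
    induction a with
    | zero => rfl
    | succ a ih => rw [show k + 4 * (a + 1) = k + 4 * a + 4 by ring, key, ih]
  have h : (7 * t) % 4 ≠ 3 := by omega
  have h4 : (7 * t) % 4 < 4 := Nat.mod_lt _ (by norm_num)
  have := key2 (7 * t / 4) (7 * t % 4)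
  rw [Nat.mod_add_div] at this
  apply Nat.dvd_of_mod_eq_zero
  rw [this]
  interval_cases (7 * t % 4) <;> first | rfl | omega

lemma main (t n : ℕ) (ht : t % 4 ≠ 1) : (16 : ℤ) ∣ coeff (8 * n + 6) (F ^ t) := by
  obtain ⟨V, hV⟩ := binom_expand 8
  obtain ⟨W, hW⟩ := binom_expand (7 * t)
  -- theta ^ 8 = 1 + 16 U
  have h8 : ∃ U : ℤ⟦X⟧, (1 + 2 * S) ^ 8 = 1 + (16 : ℤ⟦X⟧) * U := by
    refine ⟨S + 7 * S ^ 2 + 28 * S ^ 3 + V, ?_⟩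
    rw [hV]
    simp [zsmul_eq_mul, show Nat.choose 8 2 = 28 from rfl, show Nat.choose 8 3 = 56 from rfl]
    ring
  obtain ⟨U, hU⟩ := h8
  have hF : F + 16 * (F * U) = (1 + 2 * S) ^ 7 := by
    linear_combination (1 + 2 * S) ^ 7 * F_theta - F * hU
  have hd : (16 : ℤ⟦X⟧) ∣ (1 + 2 * S) ^ (7 * t) - F ^ t := by
    rw [pow_mul]
    refine (Dvd.intro (F * U) ?_ : (16 : ℤ⟦X⟧) ∣ (1 + 2 * S) ^ 7 - F).trans (sub_dvd_pow_sub_pow _ _ t)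
    linear_combination hF
  obtain ⟨Z, hZ⟩ := hd
  obtain ⟨c, hc⟩ := choose_even t ht
  have e : F ^ t = 1 + (2 * (7 * t : ℕ) : ℤ) • S + (4 * (7 * t).choose 2 : ℤ) • S ^ 2 +
      (16 : ℤ) • ((c : ℤ) • S ^ 3 + W - Z) := by
    have : F ^ t = (1 + 2 * S) ^ (7 * t) - 16 * Z := by linear_combination -hZ
    rw [this, hW, hc]
    simp only [zsmul_eq_mul]
    push_cast
    ring
  rw [e]
  have hz : ∀ (a : ℤ) (f : ℤ⟦X⟧), coeff (8 * n + 6) (a • f) = a * coeff (8 * n + 6) f := by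
    intro a f
    rw [map_zsmul, smul_eq_mul]
  rw [map_add, map_add, map_add, hz, hz, hz, coeff_S, coeff_S_sq, coeff_one, if_neg (by omega)]
  simp only [mul_zero, zero_add]
  exact dvd_mul_right _ _

end OverpartitionAux

theorem overpartitionTuples_eight_n_six_mod_sixteen (t n : ℕ) (ht : t % 4 ≠ 1) :
    overpartitionTuples t (8 * n + 6) ≡ 0 [MOD 16] := by
  rw [Nat.modEq_zero_iff_dvd]
  have h := OverpartitionAux.main t n ht
  rw [← OverpartitionAux.coeff_F_pow] at h
  exact_mod_cast h
end

section
/- For all nonnegative integers t and all n ≥ 0, the number of overpartition t-tuples satisfies p̄_t(16n+14) ≡ 0 (mod 16). -/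
open Finset PowerSeries
open scoped PowerSeries.WithPiTopology

namespace OverpartAux

/-- Partial sums of the finite form of Gauss' identity. -/
def Sg {R : Type*} [CommRing R] (q : R) (I : ℕ → R) (K n : ℕ) : R :=
  I n * I n + 2 * ∑ k ∈ range K,
    (-1) ^ (k + 1) * q ^ ((k + 1) ^ 2) * (I (n - (k + 1)) * I (n + (k + 1)))

lemma Sg_partial {R : Type*} [CommRing R] (q : R) (I : ℕ → R)
    (hI : ∀ m, I m = (1 - q ^ (m + 1)) * I (m + 1)) (n K : ℕ) (hK : K ≤ n) :
    (1 - q ^ (2 * n + 2)) * Sg q I K (n + 1) - Sg q I K n =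
      2 * (-1) ^ K * q ^ ((K + 1) ^ 2 + (n - K)) * (I (n - K) * I (n + K + 1)) := by
  induction K with
  | zero =>
    simp only [Sg, range_zero, sum_empty, Nat.sub_zero, Nat.add_zero]
    rw [hI n]; ring
  | succ K ih =>
    obtain ⟨d, rfl⟩ := Nat.exists_eq_add_of_le hK
    have ih := ih (by omega)
    have hs : ∀ m, Sg q I (K + 1) m = Sg q I K m + 2 * ((-1) ^ (K + 1) * q ^ ((K + 1) ^ 2) *
        (I (m - (K + 1)) * I (m + (K + 1)))) := by
      intro m; simp only [Sg, sum_range_succ]; ring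
    rw [hs, hs]
    have e1 : K + 1 + d - K = d + 1 := by omega
    have e2 : K + 1 + d + 1 - (K + 1) = d + 1 := by omega
    have e3 : K + 1 + d - (K + 1) = d := by omega
    have e4 : K + 1 + d + K + 1 = 2 * K + d + 2 := by omega
    have e5 : K + 1 + d + 1 + (K + 1) = 2 * K + d + 3 := by omega
    have e6 : K + 1 + d + (K + 1) = 2 * K + d + 2 := by omega
    have e7 : K + 1 + d + (K + 1) + 1 = 2 * K + d + 3 := by omega
    rw [e1, e4] at ih
    rw [e2, e3, e5, e7, e6]
    have h1 := hI d
    have h2 := hI (2 * K + d + 2)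
    rw [h2] at ih ⊢
    rw [h1]
    linear_combination ih

lemma Sg_step {R : Type*} [CommRing R] (q : R) (I : ℕ → R)
    (hI : ∀ m, I m = (1 - q ^ (m + 1)) * I (m + 1)) (n : ℕ) :
    (1 - q ^ (2 * n + 2)) * Sg q I (n + 1) (n + 1) = Sg q I n n := by
  have h := Sg_partial q I hI n n le_rfl
  have hs : Sg q I (n + 1) (n + 1) = Sg q I n (n + 1) + 2 * ((-1) ^ (n + 1) * q ^ ((n + 1) ^ 2) *
        (I 0 * I (2 * n + 2))) := by
    simp only [Sg, sum_range_succ]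
    rw [show n + 1 - (n + 1) = 0 by omega, show n + 1 + (n + 1) = 2 * n + 2 by omega]; ring
  rw [Nat.sub_self, show n + n + 1 = 2 * n + 1 by omega, hI (2 * n + 1)] at h
  rw [hs]
  linear_combination h

/-- `(q;q)_m` -/
noncomputable def a (m : ℕ) : ℤ⟦X⟧ := ∏ j ∈ range m, (1 - X ^ (j + 1))
/-- `(-q;q)_m` -/
noncomputable def b (m : ℕ) : ℤ⟦X⟧ := ∏ j ∈ range m, (1 + X ^ (j + 1))
/-- `1 / (q;q)_m` -/
noncomputable def I (m : ℕ) : ℤ⟦X⟧ := invOfUnit (a m) 1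

lemma a_mul_I (m : ℕ) : a m * I m = 1 := by
  apply mul_invOfUnit
  simp [a, map_prod]

lemma a_succ (m : ℕ) : a (m + 1) = a m * (1 - X ^ (m + 1)) := by
  simp [a, prod_range_succ]

lemma b_succ (m : ℕ) : b (m + 1) = b m * (1 + X ^ (m + 1)) := by
  simp [b, prod_range_succ]

lemma I_rec (m : ℕ) : I m = (1 - X ^ (m + 1)) * I (m + 1) := by
  have h1 := a_mul_I m
  have h2 := a_mul_I (m + 1)
  rw [a_succ] at h2
  linear_combination (-I m) * h2 + ((1 - X ^ (m + 1)) * I (m + 1)) * h1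

lemma Sg_eq (n : ℕ) : Sg X I n n * (a n * b n) = 1 := by
  induction n with
  | zero =>
    have := a_mul_I 0
    simp only [a, range_zero, prod_empty, one_mul] at this
    simp [Sg, a, b, this]
  | succ n ih =>
    rw [← Sg_step X I I_rec n] at ih
    rw [a_succ, b_succ]
    linear_combination ih

/-- congruence: `a n * I (n - k) ≡ 1` mod `X^(n-k+1)` -/
lemma aI_down (m k : ℕ) : (X : ℤ⟦X⟧) ^ (m + 1) ∣ a (m + k) * I m - 1 := by
  induction k with
  | zero => simp [a_mul_I]
  | succ k ih =>
    have : a (m + (k + 1)) * I m - 1 =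
        (a (m + k) * I m - 1) - X ^ (m + 1) * (X ^ k * (a (m + k) * I m)) := by
      rw [← add_assoc, a_succ]; ring
    rw [this]
    exact dvd_sub ih (dvd_mul_right _ _)

lemma aI_up (m k : ℕ) : (X : ℤ⟦X⟧) ^ (m + 1) ∣ a m * I (m + k) - 1 := by
  induction k with
  | zero => simp [a_mul_I]
  | succ k ih =>
    have : a m * I (m + (k + 1)) - 1 =
        (a m * I (m + k) - 1) + X ^ (m + 1) * (X ^ k * (a m * I (m + (k + 1)))) := by
      rw [← add_assoc, I_rec (m + k)]; ring
    rw [this]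
    exact dvd_add ih (dvd_mul_right _ _)

/-- truncated theta series -/
noncomputable def th (n : ℕ) : ℤ⟦X⟧ :=
  1 + 2 * ∑ k ∈ range n, (-1) ^ (k + 1) * X ^ ((k + 1) ^ 2)

lemma Sg_th (n : ℕ) : (X : ℤ⟦X⟧) ^ (n + 1) ∣ Sg X I n n * (a n * a n) - th n := by
  have : Sg X I n n * (a n * a n) - th n = 2 * ∑ k ∈ range n,
      (-1) ^ (k + 1) * (X ^ ((k + 1) ^ 2) *
        ((a n * I (n - (k + 1))) * (a n * I (n + (k + 1))) - 1)) := by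
    have h : ∑ k ∈ range n, (-1) ^ (k + 1) * ((X : ℤ⟦X⟧) ^ ((k + 1) ^ 2) *
        ((a n * I (n - (k + 1))) * (a n * I (n + (k + 1))) - 1)) =
        (∑ k ∈ range n, (-1) ^ (k + 1) * X ^ ((k + 1) ^ 2) *
          (I (n - (k + 1)) * I (n + (k + 1)))) * (a n * a n) -
        ∑ k ∈ range n, (-1) ^ (k + 1) * X ^ ((k + 1) ^ 2) := by
      rw [sum_mul, ← sum_sub_distrib]
      exact sum_congr rfl fun k _ => by ring
    rw [h, Sg, th]
    linear_combination (a n * I n + 1) * a_mul_I n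
  rw [this]
  refine Dvd.dvd.mul_left (dvd_sum fun k hk => Dvd.dvd.mul_left ?_ _) _
  have hk := mem_range.1 hk
  obtain ⟨m, rfl⟩ := Nat.exists_eq_add_of_le' (show k + 1 ≤ n from hk)
  rw [Nat.add_sub_cancel]
  have h1 : (X : ℤ⟦X⟧) ^ (m + 1) ∣ a (m + (k + 1)) * I m * (a (m + (k + 1)) *
      I (m + (k + 1) + (k + 1))) - 1 := by
    have e : a (m + (k + 1)) * I m * (a (m + (k + 1)) * I (m + (k + 1) + (k + 1))) - 1 =
      (a (m + (k + 1)) * I m - 1) * (a (m + (k + 1)) * I (m + (k + 1) + (k + 1))) +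
      (a (m + (k + 1)) * I (m + (k + 1) + (k + 1)) - 1) := by ring
    rw [e]
    exact dvd_add (Dvd.dvd.mul_right (aI_down _ _) _)
      ((pow_dvd_pow X (by omega)).trans (aI_up _ _))
  have h2 := mul_dvd_mul (dvd_refl ((X : ℤ⟦X⟧) ^ ((k + 1) ^ 2))) h1
  rw [← pow_add] at h2
  exact (pow_dvd_pow X (by nlinarith)).trans h2

/-- coefficients of the theta series -/
def s (n : ℕ) : ℤ := if IsSquare n ∧ n ≠ 0 then (-1) ^ n else 0

lemma coeff_th (n d : ℕ) (hd : d ≤ n) : coeff d (th n) = coeff d (1 + 2 * mk s) := by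
  have h2 : ∀ f : ℤ⟦X⟧, coeff d (2 * f) = 2 * coeff d f := fun f => by
    rw [two_mul, two_mul, map_add]
  rw [th, map_add, map_add, h2, h2, map_sum, coeff_mk]
  congr 2
  have hc : ∀ k, coeff d ((-1 : ℤ⟦X⟧) ^ (k + 1) * X ^ ((k + 1) ^ 2)) =
      if d = (k + 1) ^ 2 then (-1) ^ (k + 1) else 0 := by
    intro k
    have : (-1 : ℤ⟦X⟧) ^ (k + 1) = C ((-1) ^ (k + 1)) := by simp
    rw [this, coeff_C_mul, coeff_X_pow]; simp
  simp only [hc]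
  unfold s
  split_ifs with h
  · obtain ⟨⟨r, hr⟩, h0⟩ := h
    obtain ⟨k, rfl⟩ : ∃ k, r = k + 1 := Nat.exists_eq_add_one_of_ne_zero (by rintro rfl; simp_all)
    rw [sum_eq_single k]
    · rw [if_pos (by rw [hr]; ring), hr, pow_mul]
      rcases neg_one_pow_eq_or ℤ (k + 1) with h | h
      · simp [h]
      · have : Odd (k + 1) := by
          by_contra hc
          rw [Nat.not_odd_iff_even] at hc
          rw [hc.neg_one_pow] at h; norm_num at h
        rw [h, this.neg_one_pow]
    · intro j _ hj
      rw [if_neg]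
      intro hh
      apply hj
      have : (j + 1) * (j + 1) = (k + 1) * (k + 1) := by rw [← hr, hh]; ring
      have := Nat.mul_self_inj.1 this
      omega
    · intro hk
      exfalso; apply hk
      rw [mem_range]; nlinarith
  · apply sum_eq_zero
    intro k _
    rw [if_neg]
    rintro rfl
    exact h ⟨⟨k + 1, by ring⟩, by positivity⟩

/-- generating function of overpartitions -/
noncomputable def P : ℤ⟦X⟧ := Nat.Partition.genFun fun _ _ => (2 : ℤ)

lemma coeff_P (n : ℕ) : coeff n P = (overpartitionCount n : ℤ) := by
  rw [P, Nat.Partition.coeff_genFun, overpartitionCount]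
  push_cast
  refine sum_congr rfl fun p _ => ?_
  simp [Finsupp.prod]

/-- the factors of the product formula -/
noncomputable def fac (i : ℕ) : ℤ⟦X⟧ := 1 + ∑' j, C (2 : ℤ) * (X : ℤ⟦X⟧) ^ ((i + 1) * (j + 1))

lemma fac_mul (i : ℕ) : fac i * (1 - X ^ (i + 1)) = 1 + X ^ (i + 1) := by
  have hs := Nat.Partition.summable_genFun_term (fun _ _ => (2 : ℤ)) i
  simp only [smul_eq_C_mul] at hs
  have h := hs.tsum_eq_zero_add
  have h2 : ∑' j, C (2 : ℤ) * (X : ℤ⟦X⟧) ^ ((i + 1) * (j + 1 + 1)) =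
      X ^ (i + 1) * ∑' j, C (2 : ℤ) * (X : ℤ⟦X⟧) ^ ((i + 1) * (j + 1)) := by
    rw [← hs.tsum_mul_left]
    congr 1; ext1 j
    ring
  rw [h2] at h
  simp only [zero_add, mul_one] at h
  rw [fac]
  have h3 : C (2 : ℤ) * (X : ℤ⟦X⟧) ^ (i + 1) = 2 * X ^ (i + 1) := by
    rfl
  rw [h3] at h
  linear_combination h

lemma prod_fac (n : ℕ) : (∏ i ∈ range n, fac i) * a n = b n := by
  rw [a, b, ← prod_mul_distrib]
  exact prod_congr rfl fun i _ => fac_mul i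

lemma theta_mul_P : (1 + 2 * mk s) * P = 1 := by
  have hP : Filter.Tendsto (fun n => ∏ i ∈ range n, fac i) Filter.atTop (nhds P) := by
    have h := (Nat.Partition.hasProd_genFun (fun _ _ => (2 : ℤ))).tendsto_prod_nat
    simp only [smul_eq_C_mul] at h
    exact h
  have hT : Filter.Tendsto (fun n => Sg X I n n * (a n * a n)) Filter.atTop
      (nhds (1 + 2 * mk s)) := by
    rw [WithPiTopology.tendsto_iff_coeff_tendsto]
    intro d
    refine tendsto_atTop_of_eventually_const (i₀ := d) fun n hn => ?_
    rw [← coeff_th n d hn, ← sub_eq_zero, ← map_sub]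
    exact X_pow_dvd_iff.1 (Sg_th n) d (by omega)
  have h := hT.mul hP
  have h1 : ∀ n, Sg X I n n * (a n * a n) * ∏ i ∈ range n, fac i = 1 := by
    intro n
    linear_combination (Sg X I n n * a n) * prod_fac n + Sg_eq n
  simp only [h1] at h
  exact tendsto_nhds_unique h tendsto_const_nhds

lemma pow_form (t : ℕ) : ∃ (x y z : ℤ) (W : ℤ⟦X⟧), P ^ t =
    1 + C (2 * x) * mk s + C (4 * y) * mk s ^ 2 + C (8 * z) * mk s ^ 3 + C 16 * W := by
  have h := theta_mul_P
  set S : ℤ⟦X⟧ := mk s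
  induction t with
  | zero => exact ⟨0, 0, 0, 0, by simp⟩
  | succ t ih =>
    obtain ⟨x, y, z, W, hW⟩ := ih
    refine ⟨x - 1, y - x + 1, z - y + x - 1, W * P + S ^ 4 * P - C x * S ^ 4 * P +
      C y * S ^ 4 * P - C z * S ^ 4 * P, ?_⟩
    rw [pow_succ, hW]
    simp only [map_mul, map_add, map_sub, map_one, show (C 2 : ℤ⟦X⟧) = 2 from rfl,
      show (C 4 : ℤ⟦X⟧) = 4 from rfl, show (C 8 : ℤ⟦X⟧) = 8 from rfl,
      show (C 16 : ℤ⟦X⟧) = 16 from rfl]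
    linear_combination ((1 - 2 * S) * (1 + 4 * S ^ 2) + 2 * C x * S * (1 - 2 * S + 4 * S ^ 2) +
      4 * C y * S ^ 2 * (1 - 2 * S) + 8 * C z * S ^ 3) * h

lemma tuples_eq (t n : ℕ) : (overpartitionTuples t n : ℤ) = coeff n (P ^ t) := by
  have h := coeff_prod (fun _ : Fin t => P) n univ
  simp only [prod_const, card_univ, Fintype.card_fin] at h
  rw [h, overpartitionTuples]
  push_cast
  symm
  refine sum_bij (fun l _ => (l : Fin t → ℕ)) ?_ ?_ ?_ ?_
  · intro l hl
    rw [mem_finsuppAntidiag] at hl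
    rw [Finset.Nat.mem_antidiagonalTuple]; exact hl.1
  · intro l _ l' _ h; exact DFunLike.coe_injective h
  · intro c hc
    rw [Finset.Nat.mem_antidiagonalTuple] at hc
    exact ⟨Finsupp.equivFunOnFinite.symm c, by
      rw [mem_finsuppAntidiag]; exact ⟨hc, by simp⟩, rfl⟩
  · intro l _; simp [coeff_P]

lemma sq_mod (i : ℕ) (h : s i ≠ 0) : i % 16 = 0 ∨ i % 16 = 1 ∨ i % 16 = 4 ∨ i % 16 = 9 := by
  have : IsSquare i := by
    by_contra hc; exact h (by simp [s, hc])
  obtain ⟨r, rfl⟩ := this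
  rw [Nat.mul_mod]
  have : r % 16 < 16 := Nat.mod_lt _ (by norm_num)
  interval_cases r % 16 <;> simp

lemma coeff_sq (n : ℕ) : coeff (16 * n + 14) ((mk s) ^ 2) = 0 := by
  rw [pow_two, coeff_mul]
  apply sum_eq_zero
  intro p hp
  rw [HasAntidiagonal.mem_antidiagonal] at hp
  rw [coeff_mk, coeff_mk]
  by_contra hc
  have h1 := sq_mod _ (left_ne_zero_of_mul hc)
  have h2 := sq_mod _ (right_ne_zero_of_mul hc)
  omega

lemma even_coeff_sq (j : ℕ) (hj : ∀ m, s m ≠ 0 → j ≠ m + m) : (2 : ℤ) ∣ coeff j ((mk s) ^ 2) := by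
  rw [pow_two, coeff_mul]
  simp only [coeff_mk]
  rw [← Nat.cast_ofNat, ← ZMod.intCast_zmod_eq_zero_iff_dvd _ 2]
  push_cast
  refine sum_involution (fun p _ => p.swap) ?_ ?_ ?_ ?_
  · intro p _
    simp only [Prod.fst_swap, Prod.snd_swap]
    rw [mul_comm (s p.2 : ZMod 2)]
    exact CharTwo.add_self_eq_zero _
  · intro p hp hne he
    rw [HasAntidiagonal.mem_antidiagonal] at hp
    have e : p.2 = p.1 := congrArg Prod.fst he
    refine hj p.1 ?_ (by omega)
    intro h0; apply hne; simp [h0]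
  · intro p hp
    rw [HasAntidiagonal.mem_antidiagonal] at hp ⊢
    simp; omega
  · intro p _; simp

lemma coeff_cube (n : ℕ) : (2 : ℤ) ∣ coeff (16 * n + 14) ((mk s) ^ 3) := by
  rw [pow_succ', coeff_mul]
  apply dvd_sum
  intro p hp
  rw [HasAntidiagonal.mem_antidiagonal] at hp
  rw [coeff_mk]
  by_cases h : s p.1 = 0
  · simp [h]
  · apply Dvd.dvd.mul_left
    apply even_coeff_sq
    intro m hm he
    have h1 := sq_mod _ h
    have h2 := sq_mod _ hm
    omega

end OverpartAux

open OverpartAux in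
theorem overpartitionTuples_sixteen_n_fourteen_mod_sixteen (t n : ℕ) :
    overpartitionTuples t (16 * n + 14) ≡ 0 [MOD 16] := by
  rw [Nat.modEq_zero_iff_dvd, ← Int.natCast_dvd_natCast, tuples_eq]
  obtain ⟨x, y, z, W, h⟩ := pow_form t
  rw [h]
  simp only [map_add, coeff_C_mul, coeff_sq, mul_zero, add_zero, coeff_mk]
  have h1 : s (16 * n + 14) = 0 := by
    by_contra hc
    have := sq_mod _ hc
    omega
  have h2 : coeff (16 * n + 14) (1 : ℤ⟦X⟧) = 0 := by
    rw [coeff_one, if_neg (by omega)]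
  obtain ⟨c, hc⟩ := coeff_cube n
  rw [h1, h2, hc]
  exact ⟨z * c + coeff (16 * n + 14) W, by push_cast; ring⟩
end

section
/- For all integers i ≥ 1, all odd positive integers r, and all n ≥ 0, the number of overpartition (2^i·r)-tuples with odd parts satisfies OPT̄_{2^i·r}(8n+7) ≡ 0 (mod 2^{i+4}). -/
/-- The number of overpartitions of `n` into odd parts: a partition of `n` into odd
parts together with a choice of which distinct part values are overlined. -/
def overpartitionOddCount (n : ℕ) : ℕ :=
  ∑ p ∈ Nat.Partition.odds n, 2 ^ p.parts.toFinset.card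

/-- The number of overpartition `k`-tuples of `n` with odd parts. -/
def overpartitionOddTuples (k n : ℕ) : ℕ :=
  ∑ c ∈ Finset.Nat.antidiagonalTuple k n, ∏ i, overpartitionOddCount (c i)


open PowerSeries Finset

noncomputable def opP : PowerSeries ℤ := PowerSeries.mk fun n => (overpartitionOddCount n : ℤ)

lemma coeff_opP_pow (k n : ℕ) : coeff n (opP ^ k) = (overpartitionOddTuples k n : ℤ) := by
  have h : opP ^ k = ∏ _i : Fin k, opP := by simp
  rw [h, coeff_prod, overpartitionOddTuples]
  push_cast
  refine Finset.sum_nbij' (fun f => (f : Fin k → ℕ)) (fun c => Finsupp.equivFunOnFinite.symm c) ?_ ?_ ?_ ?_ ?_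
  · intro f hf
    simp [mem_finsuppAntidiag] at hf
    simp [Finset.Nat.mem_antidiagonalTuple, hf]
  · intro f hf
    simp [Finset.Nat.mem_antidiagonalTuple] at hf
    simp [mem_finsuppAntidiag, hf]
  · intro f hf; ext; simp
  · intro f hf; ext; simp
  · intro f hf; simp [opP]

lemma opP_eq_genFun : opP = Nat.Partition.genFun (fun i _ => if ¬ Even i then (2 : ℤ) else 0) := by
  ext n
  rw [opP, coeff_mk, Nat.Partition.coeff_genFun, overpartitionOddCount, Nat.Partition.odds,
    Nat.Partition.restricted, Finset.sum_filter]
  push_cast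
  refine Finset.sum_congr rfl fun p _ => ?_
  rw [Finsupp.prod, Multiset.toFinsupp_support, Finset.prod_ite_zero]
  simp

open scoped PowerSeries.WithPiTopology in
lemma geom_factor (m : ℕ) :
    (1 + ∑' j : ℕ, (2 : ℤ) • (X : PowerSeries ℤ) ^ ((m + 1) * (j + 1))) * (1 - X ^ (m + 1))
      = 1 + X ^ (m + 1) := by
  have hc : constantCoeff ((X : PowerSeries ℤ) ^ (m + 1)) = 0 := by simp
  have h := PowerSeries.WithPiTopology.tsum_pow_mul_one_sub_of_constantCoeff_eq_zero hc
  have hs := PowerSeries.WithPiTopology.summable_pow_of_constantCoeff_eq_zero hc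
  have : ∑' j : ℕ, (2 : ℤ) • (X : PowerSeries ℤ) ^ ((m + 1) * (j + 1))
      = 2 * X ^ (m + 1) * ∑' j : ℕ, ((X : PowerSeries ℤ) ^ (m + 1)) ^ j := by
    rw [← hs.tsum_mul_left]
    refine tsum_congr fun j => ?_
    rw [zsmul_eq_mul]; push_cast; ring
  rw [this]
  linear_combination 2 * X ^ (m + 1) * h

open scoped PowerSeries.WithPiTopology in
lemma opP_prod (N : ℕ) : ∃ M : ℕ, N ≤ 2 * M ∧
    (X : PowerSeries ℤ) ^ (N + 1) ∣ opP * ∏ t ∈ range M, (1 - X ^ (2 * t + 1))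
      - ∏ t ∈ range M, (1 + X ^ (2 * t + 1)) := by
  have h := Nat.Partition.hasProd_genFun (fun i _ => if ¬ Even i then (2 : ℤ) else 0)
  rw [← opP_eq_genFun] at h
  have h2 := h.tendsto_prod_nat
  rw [PowerSeries.WithPiTopology.tendsto_iff_coeff_tendsto] at h2
  have h3 : ∀ᶠ n in Filter.atTop, ∀ d ∈ range (N + 1), coeff d (∏ i ∈ range n,
      (1 + ∑' j, (if ¬ Even (i + 1) then (2 : ℤ) else 0) • (X : PowerSeries ℤ) ^ ((i + 1) * (j + 1))))
      = coeff d opP := by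
    rw [Filter.eventually_all_finset]
    intro d _
    have := h2 d
    rw [nhds_discrete] at this
    rw [Filter.tendsto_pure] at this
    exact this
  obtain ⟨L, hL⟩ := Filter.eventually_atTop.1 h3
  refine ⟨L + N, by omega, ?_⟩
  have h4 := hL (2 * (L + N)) (by omega)
  set M := L + N
  have h5 : ∀ K : ℕ, (∏ i ∈ range (2 * K),
      (1 + ∑' j, (if ¬ Even (i + 1) then (2 : ℤ) else 0) • (X : PowerSeries ℤ) ^ ((i + 1) * (j + 1))))
      * ∏ t ∈ range K, (1 - X ^ (2 * t + 1)) = ∏ t ∈ range K, (1 + X ^ (2 * t + 1)) := by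
    intro K
    induction K with
    | zero => simp
    | succ K ih =>
      rw [show 2 * (K + 1) = 2 * K + 1 + 1 by ring, prod_range_succ, prod_range_succ,
        prod_range_succ _ K, prod_range_succ _ K, ← ih, ← geom_factor]
      have e1 : ¬ Even (2 * K + 1) := by simp
      have e2 : ¬ ¬ Even (2 * K + 1 + 1) := by simp [parity_simps]
      simp only [if_pos e1, if_neg e2, zero_smul, tsum_zero]
      ring
  rw [← h5 M, ← sub_mul]
  apply Dvd.dvd.mul_right
  rw [X_pow_dvd_iff]
  intro m hm
  rw [map_sub, h4 m (by simpa using hm), sub_self]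

lemma shanks {R : Type*} [CommRing R] (q : R) (n : ℕ) :
    (1 + 2 * ∑ t ∈ range n, (-1) ^ (t + 1) * q ^ ((t + 1) ^ 2)) * ∏ k ∈ range n, (1 + q ^ (k + 1))
    = ∏ k ∈ range n, (1 - q ^ (k + 1)) + ∑ t ∈ range n, 2 * (-1) ^ (t + 1) * q ^ ((t + 1) * (n + 1))
      * (∏ k ∈ range t, (1 + q ^ (k + 1))) * ∏ k ∈ Ico (t + 1) n, (1 - q ^ (k + 1)) := by
  induction n with
  | zero => simp
  | succ n ih =>
    have tel : ∀ m, m ≤ n → ∑ t ∈ range m, (2 * (-1) ^ (t + 1) * q ^ ((t + 1) * (n + 1 + 1))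
      * (∏ k ∈ range t, (1 + q ^ (k + 1))) * ∏ k ∈ Ico (t + 1) (n + 1), (1 - q ^ (k + 1)))
      = (1 + q ^ (n + 1)) * ∑ t ∈ range m, (2 * (-1) ^ (t + 1) * q ^ ((t + 1) * (n + 1))
      * (∏ k ∈ range t, (1 + q ^ (k + 1))) * ∏ k ∈ Ico (t + 1) n, (1 - q ^ (k + 1)))
      + 2 * (-1) ^ (m + 1) * q ^ ((m + 1) * (n + 1)) * (∏ k ∈ range m, (1 + q ^ (k + 1)))
        * (∏ k ∈ Ico m n, (1 - q ^ (k + 1)))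
      + 2 * q ^ (n + 1) * ∏ k ∈ range n, (1 - q ^ (k + 1)) := by
      intro m hm
      induction m with
      | zero => simp
      | succ m ihm =>
        rw [sum_range_succ, ihm (by omega), sum_range_succ, prod_range_succ _ m,
          prod_eq_prod_Ico_succ_bot (show m < n by omega),
          prod_Ico_succ_top (show m + 1 ≤ n by omega)]
        ring
    rw [sum_range_succ _ n, sum_range_succ _ n, tel n le_rfl, prod_range_succ _ n,
      prod_range_succ _ n]
    simp only [Ico_self, prod_empty]
    linear_combination (1 + q ^ (n + 1)) * ih

lemma shanks_dvd {R : Type*} [CommRing R] (q : R) (n : ℕ) :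
    q ^ (n + 1) ∣ 
    (1 + 2 * ∑ t ∈ range n, (-1) ^ (t + 1) * q ^ ((t + 1) ^ 2)) * ∏ k ∈ range n, (1 + q ^ (k + 1))
    - ∏ k ∈ range n, (1 - q ^ (k + 1)) := by
  rw [shanks, add_sub_cancel_left]
  refine Finset.dvd_sum fun t _ => ?_
  refine Dvd.dvd.mul_right (Dvd.dvd.mul_right (Dvd.dvd.mul_left ?_ _) _) _
  exact pow_dvd_pow _ (by nlinarith)

lemma theta_split {R : Type*} [CommRing R] (q : R) (M : ℕ) :
    (1 + 2 * ∑ t ∈ range (2 * M), (-1) ^ (t + 1) * q ^ ((t + 1) ^ 2))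
    = (1 + 2 * ∑ t ∈ range M, q ^ (4 * (t + 1) ^ 2)) - 2 * ∑ t ∈ range M, q ^ ((2 * t + 1) ^ 2) := by
  induction M with
  | zero => simp
  | succ M ih =>
    rw [show 2 * (M + 1) = 2 * M + 1 + 1 by ring, sum_range_succ, sum_range_succ,
      sum_range_succ _ M, sum_range_succ _ M]
    have e1 : (-1 : R) ^ (2 * M + 1) = -1 := Odd.neg_one_pow (by simp)
    have e2 : (-1 : R) ^ (2 * M + 1 + 1) = 1 := Even.neg_one_pow (by simp [parity_simps])
    rw [e1, e2]
    linear_combination ih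

lemma prod_pair {R : Type*} [CommRing R] (q : R) (M : ℕ) :
    (∏ k ∈ range (2 * M), (1 + (-q) ^ (k + 1))) * ∏ k ∈ range (2 * M), (1 - q ^ (k + 1))
    = (∏ t ∈ range M, (1 - q ^ (2 * t + 1))) ^ 2 *
      ∏ t ∈ range M, ((1 + q ^ (2 * t + 2)) * (1 - q ^ (2 * t + 2))) := by
  induction M with
  | zero => simp
  | succ M ih =>
    rw [show 2 * (M + 1) = 2 * M + 1 + 1 by ring]
    simp only [prod_range_succ]
    have e1 : (-q) ^ (2 * M + 1) = - q ^ (2 * M + 1) := Odd.neg_pow (by simp) _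
    have e2 : (-q) ^ (2 * M + 1 + 1) = q ^ (2 * M + 1 + 1) := Even.neg_pow (by simp [parity_simps]) _
    rw [e1, e2]
    linear_combination (1 + - q ^ (2 * M + 1)) * (1 + q ^ (2 * M + 1 + 1)) * (1 - q ^ (2 * M + 1)) * (1 - q ^ (2 * M + 1 + 1)) * ih

lemma prod_pair' {R : Type*} [CommRing R] (q : R) (M : ℕ) :
    (∏ k ∈ range (2 * M), (1 + q ^ (k + 1))) * ∏ k ∈ range (2 * M), (1 - (-q) ^ (k + 1))
    = (∏ t ∈ range M, (1 + q ^ (2 * t + 1))) ^ 2 *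
      ∏ t ∈ range M, ((1 + q ^ (2 * t + 2)) * (1 - q ^ (2 * t + 2))) := by
  have h := prod_pair (-q) M
  rw [neg_neg] at h
  rw [h]
  congr 1
  · congr 1
    refine prod_congr rfl fun t _ => ?_
    rw [Odd.neg_pow (by simp)]; ring
  · refine prod_congr rfl fun t _ => ?_
    rw [Even.neg_pow (by simp [parity_simps])]

lemma theta_ratio (M : ℕ) :
    (X : PowerSeries ℤ) ^ (2 * M + 1) ∣
      ((1 + 2 * ∑ t ∈ range M, X ^ (4 * (t + 1) ^ 2)) + 2 * ∑ t ∈ range M, X ^ ((2 * t + 1) ^ 2))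
        * (∏ t ∈ range M, (1 - X ^ (2 * t + 1))) ^ 2
      - ((1 + 2 * ∑ t ∈ range M, X ^ (4 * (t + 1) ^ 2)) - 2 * ∑ t ∈ range M, X ^ ((2 * t + 1) ^ 2))
        * (∏ t ∈ range M, (1 + X ^ (2 * t + 1))) ^ 2 := by
  have h1 := shanks_dvd (X : PowerSeries ℤ) (2 * M)
  have h2 := shanks_dvd (-X : PowerSeries ℤ) (2 * M)
  rw [theta_split] at h1 h2
  have e1 : ∑ t ∈ range M, (-X : PowerSeries ℤ) ^ (4 * (t + 1) ^ 2)
      = ∑ t ∈ range M, X ^ (4 * (t + 1) ^ 2) :=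
    sum_congr rfl fun t _ => Even.neg_pow (Nat.even_mul.2 (Or.inl (by decide))) _
  have e2 : ∑ t ∈ range M, (-X : PowerSeries ℤ) ^ ((2 * t + 1) ^ 2)
      = - ∑ t ∈ range M, X ^ ((2 * t + 1) ^ 2) := by
    rw [← sum_neg_distrib]
    exact sum_congr rfl fun t _ => Odd.neg_pow (Odd.pow (by simp)) _
  rw [e1, e2, Odd.neg_pow (by simp), neg_dvd] at h2
  have h3 := dvd_sub (h2.mul_right (∏ k ∈ range (2 * M), (1 - X ^ (k + 1))))
    (h1.mul_right (∏ k ∈ range (2 * M), (1 - (-X) ^ (k + 1))))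
  have hE : IsUnit (∏ t ∈ range M, ((1 + (X : PowerSeries ℤ) ^ (2 * t + 2)) * (1 - X ^ (2 * t + 2)))) := by
    rw [PowerSeries.isUnit_iff_constantCoeff]
    simp [map_prod]
  rw [← hE.dvd_mul_right]
  convert h3 using 1
  have p1 := prod_pair (X : PowerSeries ℤ) M
  have p2 := prod_pair' (X : PowerSeries ℤ) M
  generalize ∑ t ∈ range M, (X : PowerSeries ℤ) ^ (4 * (t + 1) ^ 2) = a at *
  generalize ∑ t ∈ range M, (X : PowerSeries ℤ) ^ ((2 * t + 1) ^ 2) = b at *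
  linear_combination (-(1 + 2 * a + 2 * b)) * p1 + (1 + 2 * a - 2 * b) * p2

/-- Truncations of `((1+y)/(1-y))^k`. -/
lemma ratio_poly (k N : ℕ) : ∃ T : Polynomial ℤ,
    (∀ j, Odd j → (2 * k : ℤ) ∣ j * T.coeff j) ∧
    ∃ R : Polynomial ℤ, (1 - Polynomial.X) ^ k * T = (1 + Polynomial.X) ^ k + Polynomial.X ^ (N + 1) * R := by
  let I : PowerSeries ℤ := PowerSeries.mk 1
  have hI : I * (1 - X) = 1 := PowerSeries.mk_one_mul_one_sub_eq_one ℤ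
  let J : PowerSeries ℤ := PowerSeries.evalNegHom I
  have hJ : J * (1 + X) = 1 := by
    have := congrArg (PowerSeries.evalNegHom (A := ℤ)) hI
    simpa [PowerSeries.evalNegHom_X, J] using this
  let G : PowerSeries ℤ := (1 + X) * I
  have hG : G * (1 - X) = 1 + X := by simp only [G]; linear_combination (1 + X) * hI
  have hd : derivative ℤ G = 2 * G * (I * J) := by
    have h := congrArg (derivative ℤ) hG
    simp only [Derivation.leibniz, map_sub, map_add, derivative_X, Derivation.map_one_eq_zero, smul_eq_mul] at h
    have h2 : derivative ℤ G = derivative ℤ G * (1 - X) * I := by linear_combination (- derivative ℤ G) * hI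
    have : derivative ℤ G * (1 - X) = 1 + G := by linear_combination h
    rw [h2, this]
    simp only [G]
    linear_combination (-2 * I ^ 2) * hJ - I * hI
  clear_value G
  have hF : derivative ℤ (G ^ k) = C (2 * k : ℤ) * (G ^ k * (I * J)) := by
    cases k with
    | zero => simp
    | succ k =>
      rw [derivative_pow, hd]
      simp
      ring
  refine ⟨trunc (N + 1) (G ^ k), fun j hj => ?_, ?_⟩
  · rw [coeff_trunc]
    split_ifs
    · obtain ⟨l, rfl⟩ : ∃ l, j = l + 1 := ⟨j - 1, by have := hj.pos; omega⟩
      have := congrArg (coeff l) hF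
      rw [coeff_derivative, coeff_C_mul] at this
      refine ⟨_, Eq.trans ?_ this⟩
      push_cast; ring
    · simp
  · have h1 : (X : PowerSeries ℤ) ^ (N + 1) ∣ G ^ k - ((trunc (N + 1) (G ^ k) : Polynomial ℤ) : PowerSeries ℤ) := by
      rw [X_pow_dvd_iff]
      intro m hm
      rw [map_sub, Polynomial.coeff_coe, coeff_trunc, if_pos hm, sub_self]
    have h2 : (X : PowerSeries ℤ) ^ (N + 1) ∣
        (((1 - Polynomial.X) ^ k * trunc (N + 1) (G ^ k) - (1 + Polynomial.X) ^ k : Polynomial ℤ) : PowerSeries ℤ) := by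
      have h3 : (((1 - Polynomial.X) ^ k * trunc (N + 1) (G ^ k) - (1 + Polynomial.X) ^ k : Polynomial ℤ) : PowerSeries ℤ)
          = - ((1 - X) ^ k * (G ^ k - ((trunc (N + 1) (G ^ k) : Polynomial ℤ) : PowerSeries ℤ))) := by
        push_cast
        have hGk : G ^ k * (1 - X) ^ k = (1 + X) ^ k := by rw [← hG, mul_pow]
        linear_combination hGk
      rw [h3, dvd_neg]
      exact h1.mul_left _
    have h4 : Polynomial.X ^ (N + 1) ∣ ((1 - Polynomial.X) ^ k * trunc (N + 1) (G ^ k) - (1 + Polynomial.X) ^ k : Polynomial ℤ) := by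
      rw [Polynomial.X_pow_dvd_iff]
      intro d hd
      rw [← Polynomial.coeff_coe]
      exact X_pow_dvd_iff.1 h2 d hd
    obtain ⟨R, hR⟩ := h4
    exact ⟨R, by linear_combination hR⟩

lemma coeff_u_pow (A' B : PowerSeries ℤ) (hA : ∃ Z, A' = 1 + 2 * Z) (m j : ℕ) (c d : ℤ)
    (hd : Odd j → d ∣ c) :
    16 * d ∣ c * coeff (8 * m + 7)
      ((2 * (X * expand 8 (by norm_num) B * expand 4 (by norm_num) A')) ^ j) := by
  have e8 : expand 8 (by norm_num) B = expand 4 (by norm_num) (expand 2 (by norm_num) B) :=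
    PowerSeries.expand_mul 4 (by norm_num) 2 (by norm_num) B
  have hx : (2 * (X * expand 8 (by norm_num) B * expand 4 (by norm_num) A')) ^ j
      = C ((2 : ℤ) ^ j) * (expand 4 (by norm_num) ((expand 2 (by norm_num) B * A') ^ j) * X ^ j) := by
    rw [e8]
    simp only [map_mul, map_pow, map_ofNat]
    ring
  by_cases hj : j % 4 = 3
  swap
  · rw [hx, coeff_C_mul, coeff_mul_X_pow']
    split_ifs
    · rw [coeff_expand_of_not_dvd _ _ _ (by omega)]; simp
    · simp
  have hdc := hd (Nat.odd_iff.2 (by omega))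
  rcases Nat.lt_or_ge j 4 with h4 | h4
  · obtain rfl : j = 3 := by omega
    obtain ⟨Z, rfl⟩ := hA
    have e : (2 * (X * expand 8 (by norm_num) B * expand 4 (by norm_num) (1 + 2 * Z))) ^ 3
      = C (8 : ℤ) * (expand 8 (by norm_num) (B ^ 3) * X ^ 3) + C (16 : ℤ) * (X ^ 3 * expand 8 (by norm_num) (B ^ 3) *
         expand 4 (by norm_num) (3 * Z + 6 * Z ^ 2 + 4 * Z ^ 3)) := by
      simp only [map_mul, map_pow, map_ofNat, map_add, map_one]
      ring
    rw [e, map_add, coeff_C_mul, coeff_C_mul, coeff_mul_X_pow', if_pos (by omega),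
      coeff_expand_of_not_dvd _ _ _ (by omega), mul_zero, zero_add, mul_comm c]
    exact mul_dvd_mul (Dvd.intro _ rfl) hdc
  · rw [hx, coeff_C_mul, mul_comm c]
    refine mul_dvd_mul (Dvd.dvd.mul_right ?_ _) hdc
    exact pow_dvd_pow (2 : ℤ) h4

theorem overpartitionOddTuples_eight_n_seven (i r n : ℕ) (hi : 1 ≤ i)
    (hr : 0 < r) (hodd : Odd r) :
    overpartitionOddTuples (2 ^ i * r) (8 * n + 7) ≡ 0 [MOD 2 ^ (i + 4)] := by
  obtain ⟨i, rfl⟩ : ∃ l, i = l + 1 := ⟨i - 1, by omega⟩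
  rw [Nat.modEq_zero_iff_dvd, ← Int.natCast_dvd_natCast, ← coeff_opP_pow]
  set N := 8 * n + 7 with hN
  set k := 2 ^ i * r with hk
  rw [show 2 ^ (i + 1) * r = 2 * k by rw [hk]; ring, pow_mul]
  obtain ⟨M, hM, h1⟩ := opP_prod N
  have h2 := (pow_dvd_pow (X : PowerSeries ℤ) (show N + 1 ≤ 2 * M + 1 by omega)).trans
    (theta_ratio M)
  obtain ⟨T, hT, R, hR⟩ := ratio_poly k N
  let A : PowerSeries ℤ := 1 + 2 * ∑ t ∈ range M, X ^ ((t + 1) ^ 2)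
  let B : PowerSeries ℤ := ∑ t ∈ range M, X ^ (t * (t + 1) / 2)
  have hAu : IsUnit A := by
    rw [PowerSeries.isUnit_iff_constantCoeff]
    simp [A]
  obtain ⟨A', hA'⟩ := hAu.exists_right_inv
  have hA : (1 + 2 * ∑ t ∈ range M, (X : PowerSeries ℤ) ^ (4 * (t + 1) ^ 2))
      = expand 4 (by norm_num) A := by
    simp only [A, map_add, map_one, map_mul, map_ofNat, map_sum, map_pow, expand_X, pow_mul]
  have hB : (∑ t ∈ range M, (X : PowerSeries ℤ) ^ ((2 * t + 1) ^ 2))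
      = X * expand 8 (by norm_num) B := by
    simp only [B, map_sum, map_pow, expand_X, mul_sum]
    refine sum_congr rfl fun t _ => ?_
    rw [← pow_mul, ← pow_succ']
    congr 1
    have := Nat.div_mul_cancel (Nat.even_mul_succ_self t).two_dvd
    nlinarith
  have hex : expand 4 (by norm_num) A * expand 4 (by norm_num) A' = (1 : PowerSeries ℤ) := by
    rw [← map_mul, hA', map_one]
  rw [hA, hB] at h2
  have hO : IsUnit ((∏ t ∈ range M, (1 - (X : PowerSeries ℤ) ^ (2 * t + 1))) ^ 2) := by
    rw [PowerSeries.isUnit_iff_constantCoeff]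
    simp [map_prod]
  set x : PowerSeries ℤ := 2 * (X * expand 8 (by norm_num) B * expand 4 (by norm_num) A') with hxdef
  have h3 : (X : PowerSeries ℤ) ^ (N + 1) ∣ (1 + x) - (1 - x) * opP ^ 2 := by
    rw [← hO.dvd_mul_right]
    have h4 := (h2.sub (h1.mul_right ((expand 4 (by norm_num) A - 2 * (X * expand 8 (by norm_num) B)) *
      (opP * ∏ t ∈ range M, (1 - X ^ (2 * t + 1)) + ∏ t ∈ range M, (1 + X ^ (2 * t + 1)))))).mul_right
      (expand 4 (by norm_num) A')
    convert h4 using 1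
    rw [hxdef]
    generalize ∏ t ∈ range M, (1 - (X : PowerSeries ℤ) ^ (2 * t + 1)) = O1
    linear_combination (O1 ^ 2 * opP ^ 2 - O1 ^ 2) * hex
  have h5 : (X : PowerSeries ℤ) ^ (N + 1) ∣ (1 + x) ^ k - (1 - x) ^ k * (opP ^ 2) ^ k := by
    rw [← mul_pow]
    exact h3.trans (sub_dvd_pow_sub_pow _ _ _)
  have h6 := congrArg (Polynomial.aeval x) hR
  simp only [map_mul, map_pow, map_sub, map_add, map_one, Polynomial.aeval_X] at h6
  have hXx : (X : PowerSeries ℤ) ^ (N + 1) ∣ x ^ (N + 1) :=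
    pow_dvd_pow_of_dvd ⟨2 * (expand 8 (by norm_num) B * expand 4 (by norm_num) A'), by rw [hxdef]; ring⟩ _
  have hu : IsUnit ((1 - x) ^ k) := by
    rw [PowerSeries.isUnit_iff_constantCoeff]
    simp [hxdef]
  have h7 : (X : PowerSeries ℤ) ^ (N + 1) ∣ (opP ^ 2) ^ k - Polynomial.aeval x T := by
    rw [← hu.dvd_mul_left]
    have := (h5.add (hXx.mul_right (Polynomial.aeval x R))).neg_right
    convert this using 1
    linear_combination - h6
  have h8 := X_pow_dvd_iff.1 h7 N (by omega)
  rw [map_sub, sub_eq_zero] at h8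
  rw [h8, Polynomial.aeval_eq_sum_range, map_sum]
  refine Finset.dvd_sum fun j _ => ?_
  rw [map_smul, smul_eq_mul]
  have hfin := coeff_u_pow A' B ?_ n j (T.coeff j) (2 ^ (i + 1)) ?_
  · have e16 : ((2 ^ (i + 1 + 4) : ℕ) : ℤ) = 16 * 2 ^ (i + 1) := by
      push_cast
      ring
    rw [e16]
    exact hfin
  · refine ⟨-(A' * ∑ t ∈ range M, X ^ ((t + 1) ^ 2)), ?_⟩
    simp only [A] at hA'
    linear_combination hA'
  · intro hj
    have h9 : (2 : ℤ) ^ (i + 1) ∣ j * T.coeff j := by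
      refine Dvd.dvd.trans ⟨(r : ℤ), ?_⟩ (hT j hj)
      rw [hk]; push_cast; ring
    refine IsCoprime.dvd_of_dvd_mul_left ?_ h9
    apply IsCoprime.pow_left
    rw [Int.isCoprime_iff_gcd_eq_one]
    exact_mod_cast (Nat.coprime_two_left.2 hj)
end

section
/- For all integers i ≥ 1, j ≥ 1, all positive integers k not divisible by 2 or 3, and all n ≥ 0, the number of overpartition (3^i·2^j·k)-tuples with odd parts satisfies OPT̄_{3^i·2^j·k}(3n+2) ≡ 0 (mod 3^{i+1}·2^{j+2}). -/
open PowerSeries in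
/-- geometric series in `X ^ m` -/
noncomputable def opG (m : ℕ) : PowerSeries ℤ := PowerSeries.mk fun n => if m ∣ n then 1 else 0

open PowerSeries in
/-- the series `∑ r X ^ (m r)` -/
noncomputable def opH (m : ℕ) : PowerSeries ℤ := X ^ m * opG m ^ 2

open PowerSeries in
/-- the Euler factor -/
noncomputable def opE (m : ℕ) : PowerSeries ℤ := 2 * opG m - 1

open PowerSeries in
/-- the logarithmic derivative of the Euler factor -/
noncomputable def opL (m : ℕ) : PowerSeries ℤ := ((2 * m : ℕ) : PowerSeries ℤ) * (X ^ m * opG (2 * m))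

section
open PowerSeries

lemma opG_mul (m : ℕ) (hm : 0 < m) : (1 - X ^ m) * opG m = 1 := by
  ext n
  rw [sub_mul, one_mul, map_sub, coeff_X_pow_mul', coeff_one]
  simp only [opG, coeff_mk]
  by_cases h : m ≤ n
  · have h0 : n ≠ 0 := by omega
    have : m ∣ n - m ↔ m ∣ n := by
      rw [← Nat.dvd_add_self_right (n := n - m), Nat.sub_add_cancel h]
    simp [this, h, h0]
  · have : m ∣ n ↔ n = 0 := ⟨fun hd => by
      by_contra h0; exact h (Nat.le_of_dvd (Nat.pos_of_ne_zero h0) hd), fun h0 => by simp [h0]⟩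
    simp [h, this]

lemma opH_eq (m : ℕ) (hm : 0 < m) : opH m = opG m ^ 2 - opG m := by
  have h := opG_mul m hm
  unfold opH
  linear_combination (- opG m) * h

lemma opE_sq (m : ℕ) (hm : 0 < m) : opE m ^ 2 = 1 + 4 * opH m := by
  rw [opH_eq m hm, opE]; ring

/-- Euler derivation -/
noncomputable def opT (f : PowerSeries ℤ) : PowerSeries ℤ := X * derivative ℤ f

lemma coeff_natCast_mul (f : PowerSeries ℤ) (k n : ℕ) :
    coeff n ((k : PowerSeries ℤ) * f) = k * coeff n f := by
  rw [← nsmul_eq_mul, map_nsmul, nsmul_eq_mul]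

lemma coeff_opT (f : PowerSeries ℤ) (n : ℕ) : coeff n (opT f) = n * coeff n f := by
  cases n with
  | zero => simp [opT]
  | succ n => rw [opT, coeff_succ_X_mul, coeff_derivative]; push_cast; ring

lemma opT_mul (f g : PowerSeries ℤ) : opT (f * g) = opT f * g + f * opT g := by
  simp only [opT, Derivation.leibniz, smul_eq_mul]; ring

lemma opT_pow (f : PowerSeries ℤ) (K : ℕ) (L : PowerSeries ℤ) (h : opT f = f * L) :
    opT (f ^ K) = K * (f ^ K * L) := by
  induction K with
  | zero => simp [opT]
  | succ K ih => rw [pow_succ, opT_mul, ih, h]; push_cast; ring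

lemma opG_two (m : ℕ) (hm : 0 < m) : (1 + X ^ m) * opG (2 * m) = opG m := by
  have h1 := opG_mul m hm
  have h2 := opG_mul (2 * m) (by omega)
  have h3 : (X : PowerSeries ℤ) ^ (2 * m) = X ^ m * X ^ m := by ring
  rw [h3] at h2
  linear_combination (opG m) * h2 - ((1 + X ^ m) * opG (2 * m)) * h1

lemma opT_G (m : ℕ) (hm : 0 < m) : opT (opG m) = m * opH m := by
  have h1 := opG_mul m hm
  have h2 : opT ((1 - (X : PowerSeries ℤ) ^ m) * opG m) = 0 := by rw [h1]; simp [opT]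
  rw [opT_mul] at h2
  have h3 : opT ((1 - X ^ m : PowerSeries ℤ)) = - ((m : PowerSeries ℤ) * X ^ m) := by
    obtain ⟨k, rfl⟩ : ∃ k, m = k + 1 := ⟨m - 1, by omega⟩
    simp only [opT, map_sub, derivative_pow, derivative_X]
    simp
    ring
  rw [h3] at h2
  unfold opH
  linear_combination (opG m) * h2 - (opT (opG m)) * h1

lemma opT_E (m : ℕ) (hm : 0 < m) : opT (opE m) = opE m * opL m := by
  have h0 : opT (opE m) = 2 * opT (opG m) := by
    ext n
    simp only [coeff_opT, opE, map_sub, two_mul, map_add, coeff_one]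
    split_ifs with h
    · subst h; simp
    · ring
  rw [h0, opT_G m hm, opL, opE, opH]
  have h1 := opG_mul m hm
  have h2 := opG_two m hm
  push_cast
  linear_combination (2 * (m : PowerSeries ℤ) * X ^ m) * (- opG m * h2 - opG (2 * m) * h1)

lemma opT_prod (S : Finset ℕ) (hS : ∀ m ∈ S, 0 < m) :
    opT (∏ m ∈ S, opE m) = (∏ m ∈ S, opE m) * ∑ m ∈ S, opL m := by
  induction S using Finset.induction_on with
  | empty => simp [opT]
  | insert a S ha ih =>
    rw [Finset.prod_insert ha, Finset.sum_insert ha, opT_mul, opT_E a (hS a (by simp)),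
      ih fun m hm => hS m (by simp [hm])]
    ring

lemma sq_prod (S : Finset ℕ) (hS : ∀ m ∈ S, 0 < m) :
    ∃ R, (∏ m ∈ S, opE m) ^ 2 = 1 + 4 * (∑ m ∈ S, opH m + 2 * R) := by
  induction S using Finset.induction_on with
  | empty => exact ⟨0, by simp⟩
  | insert a S ha ih =>
    obtain ⟨R, hR⟩ := ih fun m hm => hS m (by simp [hm])
    refine ⟨R + 2 * opH a * (∑ m ∈ S, opH m + 2 * R), ?_⟩
    rw [Finset.prod_insert ha, Finset.sum_insert ha, mul_pow, hR, opE_sq a (hS a (by simp))]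
    ring

lemma pow_two_aux (V : PowerSeries ℤ) (a : ℕ) :
    ∃ W, (1 + 4 * V) ^ (2 ^ a) = 1 + 2 ^ (a + 2) * (V + 2 * W) := by
  induction a with
  | zero => exact ⟨0, by norm_num⟩
  | succ a ih =>
    obtain ⟨W, hW⟩ := ih
    refine ⟨W + 2 ^ a * (V + 2 * W) ^ 2, ?_⟩
    rw [pow_succ, pow_mul, hW]
    ring

lemma pow_aux (Y : PowerSeries ℤ) (a M : ℕ) :
    ∃ W, (1 + 2 ^ (a + 2) * Y) ^ M = 1 + 2 ^ (a + 2) * (M * Y + 2 * W) := by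
  induction M with
  | zero => exact ⟨0, by norm_num⟩
  | succ M ih =>
    obtain ⟨W, hW⟩ := ih
    refine ⟨W + 2 ^ (a + 1) * (M * Y + 2 * W) * Y, ?_⟩
    rw [pow_succ, hW]
    push_cast
    ring

lemma six_dvd_sigma (n : ℕ) (hn : n % 6 = 5) : 6 ∣ ∑ d ∈ n.divisors, d := by
  rw [← CharP.cast_eq_zero_iff (ZMod 6) 6]
  push_cast
  have key : ∀ d ∈ n.divisors, (d : ZMod 6) * ((n / d : ℕ) : ZMod 6) = 5 := by
    intro d hd
    rw [← Nat.cast_mul, Nat.mul_div_cancel' (Nat.dvd_of_mem_divisors hd)]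
    have : ((n : ℕ) : ZMod 6) = ((5 : ℕ) : ZMod 6) := (ZMod.natCast_eq_natCast_iff _ _ _).2 hn
    simpa using this
  have d1 : ∀ x y : ZMod 6, x * y = 5 → x + y = 0 := by decide
  have d2 : ∀ x : ZMod 6, x * x ≠ 5 := by decide
  refine Finset.sum_involution (fun d _ => n / d) ?_ ?_ ?_ ?_
  · intro d hd; exact d1 _ _ (key d hd)
  · intro d hd _ he
    have := key d hd
    rw [he] at this
    exact d2 _ this
  · intro d hd
    exact Nat.mem_divisors.2 ⟨Nat.div_dvd_of_dvd (Nat.dvd_of_mem_divisors hd), by omega⟩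
  · intro d hd
    exact Nat.div_div_self (Nat.dvd_of_mem_divisors hd) (by omega)

lemma coeff_opH (m n : ℕ) (hm : 0 < m) : coeff n (opH m) = if m ∣ n then ((n / m : ℕ) : ℤ) else 0 := by
  have h := congrArg (coeff n) (opT_G m hm)
  rw [coeff_opT, coeff_natCast_mul] at h
  have hm' : (m : ℤ) ≠ 0 := by positivity
  apply mul_left_cancel₀ hm'
  rw [← h]
  simp only [opG, coeff_mk]
  split_ifs with hd
  · rw [← Nat.cast_mul, Nat.mul_div_cancel' hd, mul_one]
  · simp

lemma coeff_opL (m n : ℕ) : coeff n (opL m) = if m ≤ n ∧ 2 * m ∣ n - m then ((2 * m : ℕ) : ℤ) else 0 := by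
  rw [opL, coeff_natCast_mul, coeff_X_pow_mul']
  simp only [opG, coeff_mk]
  split_ifs <;> simp_all

lemma odd_cond (m n : ℕ) : (m ≤ n ∧ 2 * m ∣ n - m) ↔ ∃ r, n = m * (2 * r + 1) := by
  constructor
  · rintro ⟨h, r, hr⟩
    exact ⟨r, by rw [mul_add, ← mul_assoc, mul_comm m 2, ← hr]; omega⟩
  · rintro ⟨r, rfl⟩
    refine ⟨Nat.le_mul_of_pos_right _ (by omega), r, ?_⟩
    rw [mul_add, mul_one, Nat.add_sub_cancel]; ring

lemma filter_eq (S : Finset ℕ) (n : ℕ) (hn : n % 2 = 1) (hS : ∀ m, m % 2 = 1 → m ≤ n → m ∈ S) :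
    S.filter (fun m => m ∣ n) = n.divisors := by
  ext m
  simp only [Finset.mem_filter, Nat.mem_divisors]
  constructor
  · rintro ⟨_, h⟩; exact ⟨h, by omega⟩
  · rintro ⟨h, _⟩
    refine ⟨hS m ?_ (Nat.le_of_dvd (by omega) h), h⟩
    exact Nat.odd_iff.1 (Odd.of_dvd_nat (Nat.odd_iff.2 hn) h)

lemma three_dvd_L (S : Finset ℕ) (n : ℕ) (hS1 : ∀ m ∈ S, m % 2 = 1)
    (hS : ∀ m, m % 2 = 1 → m ≤ n → m ∈ S) (hn : n % 3 = 2) :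
    (3 : ℤ) ∣ coeff n (∑ m ∈ S, opL m) := by
  rw [map_sum]
  simp only [coeff_opL]
  rcases Nat.mod_two_eq_zero_or_one n with h2 | h2
  · apply Finset.dvd_sum
    intro m hm
    rw [if_neg]
    · simp
    · rw [odd_cond]
      rintro ⟨r, rfl⟩
      have := hS1 m hm
      simp [Nat.mul_mod, Nat.add_mod, this] at h2
  · have : ∀ m ∈ S, (if m ≤ n ∧ 2 * m ∣ n - m then ((2 * m : ℕ) : ℤ) else 0) =
        if m ∣ n then ((2 * m : ℕ) : ℤ) else 0 := by
      intro m hm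
      refine if_congr ?_ rfl rfl
      rw [odd_cond]
      constructor
      · rintro ⟨r, rfl⟩; exact Dvd.intro _ rfl
      · rintro ⟨c, rfl⟩
        have hc : c % 2 = 1 := by
          rcases Nat.mod_two_eq_zero_or_one c with h | h
          · simp [Nat.mul_mod, h] at h2
          · exact h
        exact ⟨c / 2, by rw [show 2 * (c / 2) + 1 = c by omega]⟩
    rw [Finset.sum_congr rfl this, ← Finset.sum_filter, filter_eq S n h2 hS]
    have h6 := six_dvd_sigma n (by omega)
    rw [← Nat.cast_sum, ← Finset.mul_sum]
    exact_mod_cast Dvd.dvd.mul_left (Dvd.dvd.trans (by norm_num) h6) 2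

lemma two_dvd_H (S : Finset ℕ) (n : ℕ) (hS1 : ∀ m ∈ S, m % 2 = 1)
    (hS : ∀ m, m % 2 = 1 → m ≤ n → m ∈ S) (hn : n % 3 = 2) :
    (2 : ℤ) ∣ coeff n (∑ m ∈ S, opH m) := by
  rw [map_sum, Finset.sum_congr rfl fun m hm => coeff_opH m n (by have := hS1 m hm; omega)]
  rcases Nat.mod_two_eq_zero_or_one n with h2 | h2
  · apply Finset.dvd_sum
    intro m hm
    split_ifs with h
    · obtain ⟨c, rfl⟩ := h
      have := hS1 m hm
      rw [Nat.mul_div_cancel_left _ (by omega)]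
      simp [Nat.mul_mod, this] at h2
      omega
    · simp
  · rw [← Finset.sum_filter, filter_eq S n h2 hS, ← Nat.cast_sum, Nat.sum_div_divisors n (fun d => d)]
    have h6 := six_dvd_sigma n (by omega)
    exact_mod_cast (Dvd.dvd.trans (by norm_num) h6)

lemma main_two (S : Finset ℕ) (n : ℕ) (hS1 : ∀ m ∈ S, m % 2 = 1)
    (hS : ∀ m, m % 2 = 1 → m ≤ n → m ∈ S) (hn : n % 3 = 2) (j M : ℕ) (hj : 1 ≤ j) :
    (2 : ℤ) ^ (j + 2) ∣ coeff n ((∏ m ∈ S, opE m) ^ (2 ^ j * M)) := by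
  obtain ⟨a, rfl⟩ : ∃ a, j = a + 1 := ⟨j - 1, by omega⟩
  obtain ⟨R, hR⟩ := sq_prod S (fun m hm => by have := hS1 m hm; omega)
  obtain ⟨W, hW⟩ := pow_two_aux (∑ m ∈ S, opH m + 2 * R) a
  obtain ⟨W', hW'⟩ := pow_aux (∑ m ∈ S, opH m + 2 * R + 2 * W) a M
  rw [pow_mul, pow_succ' 2 a, pow_mul, hR, hW, hW']
  obtain ⟨t, ht⟩ := two_dvd_H S n hS1 hS hn
  have e : (1 : PowerSeries ℤ) + 2 ^ (a + 2) * (M * (∑ m ∈ S, opH m + 2 * R + 2 * W) + 2 * W')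
      = 1 + (2 ^ (a + 2) * M : ℕ) • (∑ m ∈ S, opH m) + (2 ^ (a + 3) : ℕ) • (M * (R + W) + W') := by
    simp only [nsmul_eq_mul]; push_cast; ring
  have hn0 : n ≠ 0 := by omega
  rw [e, map_add, map_add, map_nsmul, map_nsmul, ht, coeff_one, if_neg hn0]
  simp only [nsmul_eq_mul]
  refine ⟨M * t + coeff n ((M : PowerSeries ℤ) * (R + W) + W'), ?_⟩
  push_cast
  ring

lemma main_three (S : Finset ℕ) (n : ℕ) (hS1 : ∀ m ∈ S, m % 2 = 1)
    (hS : ∀ m, m % 2 = 1 → m ≤ n → m ∈ S) (hn : n % 3 = 2) (i M : ℕ) (hi : 1 ≤ i) :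
    (3 : ℤ) ^ (i + 1) ∣ coeff n ((∏ m ∈ S, opE m) ^ (3 ^ i * M)) := by
  have h := opT_pow _ (3 ^ i * M) _ (opT_prod S (fun m hm => by have := hS1 m hm; omega))
  set P := (∏ m ∈ S, opE m) ^ (3 ^ i * M)
  set L := ∑ m ∈ S, opL m with hL
  have hc : ∀ a : ℕ, (a : ℤ) * coeff a P = 3 ^ i * (M * coeff a (P * L)) := by
    intro a
    have := congrArg (coeff a) h
    rw [coeff_opT, coeff_natCast_mul] at this
    rw [this]; push_cast; ring
  have hcop : ∀ a : ℕ, a % 3 ≠ 0 → IsCoprime (3 : ℤ) a := by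
    intro a ha
    have : Nat.Coprime 3 a := (Nat.Prime.coprime_iff_not_dvd Nat.prime_three).2 (by omega)
    exact_mod_cast Nat.isCoprime_iff_coprime.2 this
  have h3 : (3 : ℤ) ∣ coeff n (P * L) := by
    rw [coeff_mul]
    apply Finset.dvd_sum
    rintro ⟨a, b⟩ hab
    have hab' : a + b = n := by simpa using hab
    by_cases ha : a % 3 = 0
    · apply Dvd.dvd.mul_left
      exact three_dvd_L S b hS1 (fun m h1 h2 => hS m h1 (by omega)) (by omega)
    · apply Dvd.dvd.mul_right
      apply (hcop a ha).dvd_of_dvd_mul_left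
      rw [hc a]
      exact Dvd.dvd.mul_right (dvd_pow_self _ (by omega)) _
  apply ((hcop n (by omega)).pow_left (m := i + 1)).dvd_of_dvd_mul_left
  rw [hc n, pow_succ]
  exact mul_dvd_mul_left _ (Dvd.dvd.mul_left h3 _)

/-- weights -/
def opf (i _c : ℕ) : ℤ := if Even i then 0 else 2

lemma coeff_opgen (n : ℕ) : coeff n (Nat.Partition.genFun opf) = overpartitionOddCount n := by
  rw [Nat.Partition.coeff_genFun, overpartitionOddCount, Nat.Partition.odds,
    Nat.Partition.restricted, Finset.sum_filter]
  push_cast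
  refine Finset.sum_congr rfl fun p _ => ?_
  rw [Finsupp.prod, Multiset.toFinsupp_support]
  split_ifs with h
  · rw [Finset.prod_congr rfl (g := fun _ => (2 : ℤ)) ?_, Finset.prod_const]
    · intro x hx
      rw [Multiset.mem_toFinset] at hx
      simp [opf, h x hx]
  · push Not at h
    obtain ⟨x, hx, he⟩ := h
    refine Finset.prod_eq_zero (i := x) (by simpa using hx) ?_
    simp [opf, he]

open scoped PowerSeries.WithPiTopology in
lemma tsum_eq (i : ℕ) : (1 : PowerSeries ℤ) + ∑' j, opf (i + 1) (j + 1) • X ^ ((i + 1) * (j + 1)) =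
    if Even (i + 1) then 1 else opE (i + 1) := by
  split_ifs with h
  · simp [opf, h]
  · ext n
    have ht := ((Nat.Partition.summable_genFun_term opf i).map_tsum (coeff n)
      (WithPiTopology.continuous_coeff ℤ n))
    rw [map_add]
    refine (congrArg (coeff n (1 : PowerSeries ℤ) + ·) ht).trans ?_
    simp only [opf, h, if_false, map_smul, coeff_X_pow, opE, opG, two_mul, map_sub, map_add,
      coeff_mk, coeff_one, smul_eq_mul]
    rcases Nat.eq_zero_or_pos n with rfl | hn
    · simp
    · by_cases hd : (i + 1) ∣ n
      · obtain ⟨c, rfl⟩ := hd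
        have hc : c ≠ 0 := by rintro rfl; simp at hn
        rw [tsum_eq_single (c - 1)]
        · have : c - 1 + 1 = c := by omega
          simp [this, hc]
        · intro b hb
          have : c ≠ b + 1 := by omega
          simp [this]
      · have : ∀ b, n ≠ (i + 1) * (b + 1) := fun b hb => hd ⟨_, hb⟩
        simp [this, hd, hn.ne']

open scoped PowerSeries.WithPiTopology in
lemma exists_S (N : ℕ) : ∃ S : Finset ℕ, (∀ m ∈ S, m % 2 = 1) ∧
    (∀ m, m % 2 = 1 → m ≤ N → m ∈ S) ∧
    ∀ d ≤ N, coeff d (∏ m ∈ S, opE m) = overpartitionOddCount d := by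
  have h := Nat.Partition.hasProd_genFun opf
  rw [HasProd, WithPiTopology.tendsto_iff_coeff_tendsto] at h
  have h1 : ∀ d ∈ Finset.range (N + 1), ∀ᶠ s : Finset ℕ in Filter.atTop,
      coeff d (∏ i ∈ s, (1 + ∑' j, opf (i + 1) (j + 1) • X ^ ((i + 1) * (j + 1)) : PowerSeries ℤ)) =
      overpartitionOddCount d := by
    intro d _
    have := h d
    rw [coeff_opgen, nhds_discrete, Filter.tendsto_pure] at this
    exact this
  have h2 := ((Filter.eventually_all_finset (Finset.range (N + 1))).2 h1).and
    (Filter.eventually_ge_atTop (Finset.range N))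
  obtain ⟨s, hs, hs'⟩ := h2.exists
  refine ⟨(s.map (addRightEmbedding 1)).filter (fun m => ¬ Even m), ?_, ?_, ?_⟩
  · intro m hm
    simp only [Finset.mem_filter, Nat.even_iff] at hm
    omega
  · intro m hm hmN
    simp only [Finset.mem_filter, Nat.even_iff, Finset.mem_map, addRightEmbedding_apply]
    exact ⟨⟨m - 1, hs' (Finset.mem_range.2 (by omega)), by omega⟩, by omega⟩
  · intro d hd
    rw [← hs d (Finset.mem_range.2 (by omega)), Finset.prod_filter, Finset.prod_map]
    congr 1
    refine Finset.prod_congr rfl fun i _ => ?_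
    rw [tsum_eq]
    by_cases he : Even (i + 1) <;> simp [he]

lemma tuples_eq (N K : ℕ) (F : PowerSeries ℤ) (h : ∀ d ≤ N, coeff d F = overpartitionOddCount d) :
    coeff N (F ^ K) = overpartitionOddTuples K N := by
  have key : ∀ K N' : ℕ, N' ≤ N → coeff N' (∏ _i : Fin K, F) = overpartitionOddTuples K N' := by
    intro K N' hN
    rw [coeff_prod, overpartitionOddTuples, ← Finset.piAntidiag_univ_fin_eq_antidiagonalTuple]
    push_cast
    refine Finset.sum_bij (fun l _ => (l : Fin K → ℕ)) ?_ ?_ ?_ ?_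
    · intro l hl
      simpa [Finset.mem_finsuppAntidiag] using hl
    · intro a _ b _ hab
      exact DFunLike.coe_injective hab
    · intro b hb
      refine ⟨Finsupp.equivFunOnFinite.symm b, ?_, rfl⟩
      simpa [Finset.mem_finsuppAntidiag] using hb
    intro l hl
    refine Finset.prod_congr rfl fun i _ => ?_
    rw [h]
    · rw [Finset.mem_finsuppAntidiag] at hl
      have := Finset.single_le_sum (f := l) (fun _ _ => Nat.zero_le _) (Finset.mem_univ i)
      have h2 : ∑ x, l x = N' := hl.1
      omega
  simpa using key K N le_rfl

end

theorem overpartitionOddTuples_three_n_two (i j k n : ℕ) (hi : 1 ≤ i) (hj : 1 ≤ j)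
    (hk : 0 < k) (hk2 : ¬ (2 ∣ k)) (hk3 : ¬ (3 ∣ k)) :
    overpartitionOddTuples (3 ^ i * 2 ^ j * k) (3 * n + 2) ≡ 0 [MOD 3 ^ (i + 1) * 2 ^ (j + 2)] := by
  obtain ⟨S, hS1, hS, hc⟩ := exists_S (3 * n + 2)
  have he := tuples_eq (3 * n + 2) (3 ^ i * 2 ^ j * k) _ hc
  have h3 := main_three S (3 * n + 2) hS1 hS (by omega) i (2 ^ j * k) hi
  have h2 := main_two S (3 * n + 2) hS1 hS (by omega) j (3 ^ i * k) hj
  rw [← mul_assoc, he] at h3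
  rw [show 2 ^ j * (3 ^ i * k) = 3 ^ i * 2 ^ j * k by ring, he] at h2
  rw [Nat.modEq_zero_iff_dvd]
  apply Nat.Coprime.mul_dvd_of_dvd_of_dvd
  · exact Nat.Coprime.pow _ _ (by norm_num)
  · exact_mod_cast h3
  · exact_mod_cast h2
end

section
/- For all integers i ≥ 1, all positive integers j that are odd, not divisible by 3, and not a power of 2, and all n ≥ 0, the number of overpartition (3^i·j)-tuples with odd parts satisfies OPT̄_{3^i·j}(3n+2) ≡ 0 (mod 3^{i+1}·2). -/
open Finset PowerSeries
open scoped PowerSeries.WithPiTopology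

/-- Generating function of overpartitions into odd parts. -/
noncomputable def ovG : ℤ⟦X⟧ := PowerSeries.mk fun n => (overpartitionOddCount n : ℤ)

/-- Logarithmic derivative of the generating function. -/
noncomputable def ovL : ℤ⟦X⟧ :=
  PowerSeries.mk fun n => if Odd n then 2 * ∑ d ∈ n.divisors, (d : ℤ) else 0

/-- The logarithmic derivative of a single factor. -/
noncomputable def ovl (m : ℕ) : ℤ⟦X⟧ :=
  PowerSeries.mk fun n => if m ∣ n ∧ Odd (n / m) then 2 * (m : ℤ) else 0

/-- A single factor. -/
noncomputable def ovu (m : ℕ) : ℤ⟦X⟧ :=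
  1 + ∑' j : ℕ, (if Odd m then (2 : ℤ) else 0) • (X : ℤ⟦X⟧) ^ (m * (j + 1))

theorem ovG_eq : ovG = Nat.Partition.genFun (fun i _ => if Odd i then (2 : ℤ) else 0) := by
  ext n
  rw [Nat.Partition.coeff_genFun, ovG, coeff_mk, overpartitionOddCount, Nat.Partition.odds,
    Nat.Partition.restricted, Finset.sum_filter]
  push_cast
  refine Finset.sum_congr rfl fun p _ => ?_
  rw [Finsupp.prod, Multiset.toFinsupp_support]
  split_ifs with h
  · rw [Finset.prod_congr rfl (g := fun _ => (2 : ℤ))]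
    · simp
    · intro x hx
      rw [if_pos]
      exact Nat.not_even_iff_odd.1 (h x (Multiset.mem_toFinset.1 hx))
  · push Not at h
    obtain ⟨x, hx, hx'⟩ := h
    rw [Finset.prod_eq_zero (Multiset.mem_toFinset.2 hx)]
    · rw [if_neg]
      exact Nat.not_odd_iff_even.2 hx'

theorem ovG_hasProd : HasProd (fun i => ovu (i + 1)) ovG := by
  rw [ovG_eq]
  have h := Nat.Partition.hasProd_genFun (R := ℤ) (fun i _ => if Odd i then (2 : ℤ) else 0)
  have e : (fun i => ovu (i + 1)) = fun i : ℕ => (1 : ℤ⟦X⟧) +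
      ∑' j : ℕ, (if Odd (i + 1) then (2 : ℤ) else 0) • (X : ℤ⟦X⟧) ^ ((i + 1) * (j + 1)) := by
    funext i
    rw [ovu]
  rw [e]
  exact h

theorem ovu_mul (m : ℕ) (hm : Odd m) : ovu m * (1 - X ^ m) = 1 + X ^ m := by
  have hm0 : m ≠ 0 := by rintro rfl; simp at hm
  have hc : constantCoeff ((X : ℤ⟦X⟧) ^ m) = 0 := by simp [hm0]
  have hs := WithPiTopology.summable_pow_of_constantCoeff_eq_zero hc
  have h := WithPiTopology.tsum_pow_mul_one_sub_of_constantCoeff_eq_zero hc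
  have e : ovu m = 1 + 2 * X ^ m * ∑' j : ℕ, ((X : ℤ⟦X⟧) ^ m) ^ j := by
    rw [ovu, ← hs.tsum_mul_left]
    congr 1
    refine tsum_congr fun j => ?_
    rw [if_pos hm, pow_mul, pow_succ, two_smul]
    ring
  rw [e]
  linear_combination 2 * X ^ m * h

theorem ovl_mul (m : ℕ) (hm : m ≠ 0) : ovl m * (1 - X ^ (2 * m)) = 2 * (m : ℤ⟦X⟧) * X ^ m := by
  ext n
  have e : (2 * (m : ℤ⟦X⟧) * X ^ m : ℤ⟦X⟧) = C (2 * (m : ℤ)) * X ^ m := by simp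
  rw [e, mul_sub, mul_one, map_sub, coeff_mul_X_pow', coeff_C_mul, coeff_X_pow, ovl, coeff_mk,
    coeff_mk]
  have hm' : 0 < m := Nat.pos_of_ne_zero hm
  by_cases hd : m ∣ n
  · obtain ⟨t, rfl⟩ := hd
    by_cases h2 : 2 ≤ t
    · obtain ⟨s, rfl⟩ := Nat.exists_eq_add_of_le h2
      have h1 : 2 * m ≤ m * (2 + s) := by nlinarith
      have h3 : m * (2 + s) - 2 * m = m * s := by
        rw [mul_add, mul_comm m 2]; omega
      have h4 : ¬ m * (2 + s) = m := by nlinarith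
      have h5 : Odd (2 + s) ↔ Odd s := by
        rw [Nat.odd_iff, Nat.odd_iff]; omega
      rw [if_pos h1, h3, if_neg h4, Nat.mul_div_cancel_left _ hm', Nat.mul_div_cancel_left _ hm']
      simp [h5]
    · have h1 : ¬ 2 * m ≤ m * t := by nlinarith
      rw [if_neg h1, Nat.mul_div_cancel_left _ hm']
      have : t = 0 ∨ t = 1 := by omega
      rcases this with rfl | rfl
      · simp [hm.symm]
      · simp
  · have h4 : ¬ n = m := fun h => hd (h ▸ dvd_rfl)
    rw [if_neg (fun h => hd h.1), if_neg h4]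
    by_cases h1 : 2 * m ≤ n
    · have : ¬ m ∣ n - 2 * m := fun h =>
        hd ((Nat.dvd_sub_iff_left h1 (Dvd.intro_left 2 rfl)).1 h)
      simp [this]
    · simp [h1]

theorem ovD_pow (m : ℕ) (hm : m ≠ 0) :
    X * derivative ℤ ((X : ℤ⟦X⟧) ^ m) = (m : ℤ⟦X⟧) * X ^ m := by
  obtain ⟨t, rfl⟩ := Nat.exists_eq_succ_of_ne_zero hm
  rw [derivative_pow, derivative_X]
  simp [pow_succ]
  ring

theorem ovu_D (m : ℕ) (hm : Odd m) : X * derivative ℤ (ovu m) = ovu m * ovl m := by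
  have hm0 : m ≠ 0 := by rintro rfl; simp at hm
  have h1 := ovu_mul m hm
  have h2 := ovl_mul m hm0
  have h3 := congrArg (fun f => X * derivative ℤ f) h1
  simp only [Derivation.leibniz, map_sub, map_add, smul_eq_mul, derivative_one] at h3
  have h4 := ovD_pow m hm0
  have hne : (1 - X ^ m : ℤ⟦X⟧) ≠ 0 := by
    intro h
    have := congrArg constantCoeff h
    simp [hm0] at this
  apply mul_left_cancel₀ hne
  apply mul_left_cancel₀ hne
  rw [mul_comm 2 m, pow_mul] at h2
  linear_combination (1 - X ^ m) * h3 + (1 - X ^ m) * (ovu m + 1) * h4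
    + (m * X ^ m - ovl m * (1 - X ^ m)) * h1 - h2

theorem ovu_even (m : ℕ) (hm : ¬ Odd m) : ovu m = 1 := by
  simp [ovu, hm]

theorem ovprod_D (s : Finset ℕ) :
    X * derivative ℤ (∏ i ∈ s, ovu (i + 1)) =
      (∏ i ∈ s, ovu (i + 1)) * ∑ i ∈ s, (if Odd (i + 1) then ovl (i + 1) else 0) := by
  induction s using Finset.induction_on with
  | empty => simp
  | insert a s ha ih =>
    rw [Finset.prod_insert ha, Finset.sum_insert ha, Derivation.leibniz, smul_eq_mul, smul_eq_mul]
    by_cases h : Odd (a + 1)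
    · rw [if_pos h]
      linear_combination ovu (a + 1) * ih + (∏ i ∈ s, ovu (i + 1)) * ovu_D _ h
    · rw [if_neg h, ovu_even _ h, derivative_one]
      linear_combination ih

theorem ovL_coeff (s : Finset ℕ) (b : ℕ) (hs : Finset.range b ⊆ s) :
    coeff b (∑ i ∈ s, (if Odd (i + 1) then ovl (i + 1) else 0)) = coeff b ovL := by
  rw [map_sum, ovL, coeff_mk]
  have e : ∀ i ∈ s, coeff b (if Odd (i + 1) then ovl (i + 1) else 0) =
      if Odd b ∧ (i + 1) ∣ b then 2 * ((i + 1 : ℕ) : ℤ) else 0 := by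
    intro i _
    by_cases hd : (i + 1) ∣ b
    · obtain ⟨t, rfl⟩ := hd
      by_cases h : Odd (i + 1)
      · simp only [if_pos h, ovl, coeff_mk, Nat.mul_div_cancel_left t (Nat.succ_pos i),
          Nat.odd_mul]
        simp [h]
      · simp only [if_neg h, Nat.odd_mul]
        simp [h]
    · split_ifs <;> simp_all [ovl]
  rw [Finset.sum_congr rfl e]
  by_cases hb : Odd b
  · have hb0 : b ≠ 0 := by rintro rfl; simp at hb
    simp only [hb, true_and, if_true]
    rw [← Finset.sum_filter, Finset.mul_sum]
    refine Finset.sum_bij (fun i _ => i + 1) ?_ ?_ ?_ ?_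
    · intro i hi
      exact Nat.mem_divisors.2 ⟨(Finset.mem_filter.1 hi).2, hb0⟩
    · intro i _ j _ h
      simpa using h
    · intro d hd
      have hd' := (Nat.mem_divisors.1 hd).1
      have hpos := Nat.pos_of_mem_divisors hd
      have hle := Nat.le_of_dvd (Nat.pos_of_ne_zero hb0) hd'
      refine ⟨d - 1, Finset.mem_filter.2 ⟨hs (Finset.mem_range.2 (by omega)), ?_⟩, by omega⟩
      rwa [Nat.sub_add_cancel hpos]
    · intro i _
      rfl
  · simp [hb]

theorem ovG_D : X * derivative ℤ ovG = ovG * ovL := by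
  have key : ∀ d, ∀ᶠ s in Filter.atTop, coeff d (∏ i ∈ s, ovu (i + 1)) = coeff d ovG := by
    intro d
    have h := ovG_hasProd
    rw [HasProd] at h
    have h2 := ((WithPiTopology.continuous_coeff ℤ d).tendsto ovG).comp h
    rw [nhds_discrete, Filter.tendsto_pure] at h2
    simpa using h2
  ext n
  have h1 : ∀ᶠ s in (Filter.atTop : Filter (Finset ℕ)), ∀ d ∈ Finset.range (n + 1),
      coeff d (∏ i ∈ s, ovu (i + 1)) = coeff d ovG :=
    (Filter.eventually_all_finset _).2 fun d _ => key d
  obtain ⟨s, hs, hs'⟩ := (h1.and (Filter.eventually_ge_atTop (Finset.range n))).exists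
  have h := congrArg (coeff n) (ovprod_D s)
  have e1 : coeff n (X * derivative ℤ (∏ i ∈ s, ovu (i + 1))) =
      coeff n (X * derivative ℤ ovG) := by
    cases n with
    | zero => simp
    | succ n =>
      rw [coeff_succ_X_mul, coeff_succ_X_mul, coeff_derivative, coeff_derivative,
        hs (n + 1) (by simp)]
  rw [e1] at h
  rw [h, coeff_mul, coeff_mul]
  refine Finset.sum_congr rfl fun p hp => ?_
  have hp' := Finset.HasAntidiagonal.mem_antidiagonal.1 hp
  rw [hs p.1 (Finset.mem_range.2 (by omega)), ovL_coeff s p.2]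
  intro x hx
  apply hs'
  rw [Finset.mem_range] at hx ⊢
  omega

theorem ovGpow_D (k : ℕ) : X * derivative ℤ (ovG ^ k) = (k : ℤ⟦X⟧) * (ovG ^ k * ovL) := by
  cases k with
  | zero => simp
  | succ k =>
    rw [derivative_pow, Nat.add_sub_cancel]
    linear_combination ((k + 1 : ℕ) : ℤ⟦X⟧) * ovG ^ k * ovG_D

theorem ov_rec (k n : ℕ) : (n : ℤ) * coeff n (ovG ^ k) =
    k * ∑ p ∈ Finset.HasAntidiagonal.antidiagonal n, coeff p.1 (ovG ^ k) * coeff p.2 ovL := by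
  have h := congrArg (coeff n) (ovGpow_D k)
  have e : ((k : ℤ⟦X⟧) * (ovG ^ k * ovL) : ℤ⟦X⟧) = C (k : ℤ) * (ovG ^ k * ovL) := by simp
  rw [e, coeff_C_mul] at h
  rw [← coeff_mul, ← h]
  cases n with
  | zero => simp
  | succ n =>
    rw [coeff_succ_X_mul, coeff_derivative]
    push_cast
    ring

theorem ov_tuples_s18 (k n : ℕ) : (overpartitionOddTuples k n : ℤ) = coeff n (ovG ^ k) := by
  have e : ovG ^ k = ∏ _i : Fin k, ovG := by simp
  rw [e, coeff_prod, overpartitionOddTuples]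
  push_cast
  refine Finset.sum_bij' (fun c _ => Finsupp.equivFunOnFinite.symm c) (fun f _ => ⇑f) ?_ ?_ ?_ ?_ ?_
  · intro c hc
    rw [Finset.Nat.mem_antidiagonalTuple] at hc
    simp [Finset.mem_finsuppAntidiag, hc]
  · intro f hf
    rw [Finset.mem_finsuppAntidiag] at hf
    rw [Finset.Nat.mem_antidiagonalTuple]
    exact hf.1
  · intro c _
    simp
  · intro f _
    ext; simp
  · intro c _
    simp [ovG]

theorem ov_even (n : ℕ) (hn : n ≠ 0) : 2 ∣ overpartitionOddCount n := by
  refine Finset.dvd_sum fun p _ => dvd_pow_self 2 ?_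
  intro h
  rw [Finset.card_eq_zero, Multiset.toFinset_eq_empty] at h
  have := p.parts_sum
  rw [h] at this
  exact hn (by simpa using this.symm)

theorem ov_tuples_even (k n : ℕ) (hn : n ≠ 0) : 2 ∣ overpartitionOddTuples k n := by
  refine Finset.dvd_sum fun c hc => ?_
  rw [Finset.Nat.mem_antidiagonalTuple] at hc
  obtain ⟨i, _, hi⟩ : ∃ i ∈ Finset.univ, c i ≠ 0 := by
    apply Finset.exists_ne_zero_of_sum_ne_zero
    rwa [hc]
  exact (ov_even _ hi).trans (Finset.dvd_prod_of_mem (fun i => overpartitionOddCount (c i))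
    (Finset.mem_univ i))

theorem ovL_three (b : ℕ) (hb : b % 3 = 2) : (3 : ℤ) ∣ coeff b ovL := by
  rw [ovL, coeff_mk]
  split_ifs
  · have h : 2 * ∑ d ∈ b.divisors, d = ∑ d ∈ b.divisors, (d + b / d) := by
      rw [Finset.sum_add_distrib, Nat.sum_div_divisors b (fun d => d), two_mul]
    have h2 : 3 ∣ 2 * ∑ d ∈ b.divisors, d := by
      rw [h]
      refine Finset.dvd_sum fun d hd => ?_
      obtain ⟨e, rfl⟩ := (Nat.mem_divisors.1 hd).1
      rw [Nat.mul_div_cancel_left _ (Nat.pos_of_mem_divisors hd)]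
      rw [Nat.mul_mod] at hb
      have h1 : d % 3 < 3 := Nat.mod_lt _ (by norm_num)
      have h2 : e % 3 < 3 := Nat.mod_lt _ (by norm_num)
      apply Nat.dvd_of_mod_eq_zero
      rw [Nat.add_mod]
      interval_cases d % 3 <;> interval_cases e % 3 <;> simp_all
    have h3 : ((3 : ℕ) : ℤ) ∣ ((2 * ∑ d ∈ b.divisors, d : ℕ) : ℤ) := Int.natCast_dvd_natCast.2 h2
    push_cast at h3
    exact h3
  · simp

theorem overpartitionOddTuples_odd_three_n_two (i j n : ℕ) (hi : 1 ≤ i) (hj : 0 < j)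
    (hjodd : Odd j) (hj3 : ¬ (3 ∣ j)) (hjpow : ¬ ∃ m : ℕ, j = 2 ^ m) :
    overpartitionOddTuples (3 ^ i * j) (3 * n + 2) ≡ 0 [MOD 3 ^ (i + 1) * 2] := by
  rw [Nat.modEq_zero_iff_dvd]
  refine Nat.Coprime.mul_dvd_of_dvd_of_dvd (Nat.Coprime.pow_left _ (by norm_num)) ?_
    (ov_tuples_even _ _ (by omega))
  set k := 3 ^ i * j with hk
  have hk3 : (3 : ℤ) ∣ (k : ℤ) := by
    have : 3 ∣ k := (dvd_pow_self 3 (by omega)).trans (Dvd.intro _ rfl)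
    exact_mod_cast this
  have p3 : Prime (3 : ℤ) := Int.prime_three
  have hc : ∀ a : ℕ, ¬ 3 ∣ a → (3 : ℤ) ∣ coeff a (ovG ^ k) := by
    intro a ha
    have h : (3 : ℤ) ∣ (a : ℤ) * coeff a (ovG ^ k) := by
      rw [ov_rec]
      exact hk3.mul_right _
    refine (p3.dvd_or_dvd h).resolve_left ?_
    exact_mod_cast ha
  have hmain : (3 : ℤ) ^ (i + 1) ∣ ((3 * n + 2 : ℕ) : ℤ) * coeff (3 * n + 2) (ovG ^ k) := by
    rw [ov_rec, pow_succ]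
    refine mul_dvd_mul ?_ (Finset.dvd_sum fun p hp => ?_)
    · rw [hk]
      push_cast
      exact Dvd.intro _ rfl
    · have hp' := Finset.HasAntidiagonal.mem_antidiagonal.1 hp
      by_cases h : p.2 % 3 = 2
      · exact (ovL_three _ h).mul_left _
      · exact (hc p.1 (by omega)).mul_right _
  have hcop : IsCoprime ((3 : ℤ) ^ (i + 1)) ((3 * n + 2 : ℕ) : ℤ) := by
    apply IsCoprime.pow_left
    rw [show (3 : ℤ) = ((3 : ℕ) : ℤ) by norm_num, Nat.isCoprime_iff_coprime,
      Nat.Prime.coprime_iff_not_dvd Nat.prime_three]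
    omega
  have := hcop.dvd_of_dvd_mul_left hmain
  rw [← ov_tuples_s18] at this
  exact_mod_cast this
end
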